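/- arXiv:1010.0382 — 2 statements merged into one kernel-verified Lean document; each statement's English description precedes it below -/
import Mathlib

section
/- Let n : ℕ and R : Finset (FreeGroup (Fin n)) be a finite set of relators. Suppose there exists a computable function f : ℕ → ℕ (Computable f) such that every w ∈ Subgroup.normalClosure (↑R) can be written as an ordered product w = ∏_{i=1}^{m} cᵢ⁻¹ · rᵢ^{εᵢ} · cᵢ with m ≤ f ((FreeGroup.toWord w).length), where each cᵢ ∈ FreeGroup (Fin n), each rᵢ ∈ R and each εᵢ ∈ {1, -1}. Then the word problem for the finitely presented group ⟨Fin n; R⟩ is decidable: ComputablePred (fun l : List (Fin n × Bool) => FreeGroup.mk l ∈ Subgroup.normalClosure (↑R)). (Equivalently, if the word problem is recursively unsolvable, then the number of conjugates of relators needed to express trivial words of length at most N — the isoperimetric function — is not bounded by any recursive function of N.) -/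
namespace WordProb

open FreeGroup

/-- The formal inverse of a letter. -/
def bar {α : Type} (x : α × Bool) : α × Bool := (x.1, !x.2)

theorem bar_bar {α : Type} (x : α × Bool) : bar (bar x) = x := by simp [bar]

theorem invRev_cons' {α : Type} (x : α × Bool) (l : List (α × Bool)) :
    invRev (x :: l) = invRev l ++ [bar x] := by simp [invRev, bar]

/-- Planar derivations: `Der P j w` says that the word `w` bounds a diagram with at most `j`
cells, all cells having boundary labels in `P`. The derivation always examines the first letter. -/
inductive Der {α : Type} (P : List (α × Bool) → Prop) : ℕ → List (α × Bool) → Prop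
  | nil (j : ℕ) : Der P j []
  | edge (j k : ℕ) (x : α × Bool) (u v : List (α × Bool)) :
      Der P j u → Der P k v → Der P (j + k) (x :: (u ++ bar x :: v))
  | face (j : ℕ) (x : α × Bool) (y w : List (α × Bool)) :
      P (x :: y) → Der P j (invRev y ++ w) → Der P (j + 1) (x :: w)

variable {α : Type} {P : List (α × Bool) → Prop}

theorem Der.inv {j : ℕ} {x : α × Bool} {w : List (α × Bool)} (h : Der P j (x :: w)) :
    (∃ j1 j2 u v, j = j1 + j2 ∧ w = u ++ bar x :: v ∧ Der P j1 u ∧ Der P j2 v) ∨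
    (∃ j' y, j = j' + 1 ∧ P (x :: y) ∧ Der P j' (invRev y ++ w)) := by
  generalize hW : x :: w = W at h
  cases h with
  | nil => simp at hW
  | edge j k x' u v hu hv =>
    simp only [List.cons.injEq] at hW
    obtain ⟨rfl, rfl⟩ := hW
    exact Or.inl ⟨j, k, u, v, rfl, rfl, hu, hv⟩
  | face j x' y w' hP hw =>
    simp only [List.cons.injEq] at hW
    obtain ⟨rfl, rfl⟩ := hW
    exact Or.inr ⟨j, y, rfl, hP, hw⟩

theorem Der.mono_add {j : ℕ} {w : List (α × Bool)} (h : Der P j w) (k : ℕ) : Der P (j + k) w := by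
  induction h with
  | nil => exact Der.nil _
  | edge j1 j2 x u v hu hv ihu ihv =>
    rw [add_assoc]
    exact Der.edge _ _ _ _ _ hu ihv
  | face j x y w hP hw ih =>
    rw [add_right_comm]
    exact Der.face _ _ _ _ hP ih

theorem Der.mono {j k : ℕ} {w : List (α × Bool)} (h : Der P j w) (hk : j ≤ k) : Der P k w := by
  obtain ⟨d, rfl⟩ := Nat.exists_eq_add_of_le hk
  exact h.mono_add d

theorem Der.append {j k : ℕ} {u v : List (α × Bool)} (hu : Der P j u) (hv : Der P k v) :
    Der P (j + k) (u ++ v) := by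
  induction hu with
  | nil j => exact hv.mono (by omega)
  | edge j1 j2 x u' v' hu' hv' ihu ihv =>
    have := Der.edge j1 (j2 + k) x u' (v' ++ v) hu' ihv
    simpa [add_assoc] using this
  | face j x y w hP hw ih =>
    rw [add_right_comm]
    exact Der.face _ _ y _ hP (by simpa using ih)

theorem Der.insert {j k : ℕ} {u W : List (α × Bool)} (hu : Der P j u) (hW : Der P k W) :
    ∀ p q : List (α × Bool), W = p ++ q → Der P (j + k) (p ++ (u ++ q)) := by
  induction hW with
  | nil k =>
    intro p q h
    obtain ⟨rfl, rfl⟩ := List.append_eq_nil_iff.1 h.symm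
    simpa using hu.mono_add k
  | edge j1 j2 x a v ha hv iha ihv =>
    intro p q h
    rcases p with _ | ⟨x', p⟩
    · simp only [List.nil_append] at h ⊢
      subst h
      exact hu.append (Der.edge _ _ _ _ _ ha hv)
    · simp only [List.cons_append, List.cons.injEq] at h
      obtain ⟨rfl, h⟩ := h
      rcases List.append_eq_append_iff.1 h with ⟨c, h1, h2⟩ | ⟨c, h1, h2⟩
      · rcases c with _ | ⟨z, c⟩
        · simp only [List.nil_append, List.append_nil] at h1 h2
          subst h1 h2
          have := Der.edge _ _ x (p ++ (u ++ [])) v (iha p [] (by simp)) hv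
          simpa [add_assoc] using this
        · simp only [List.cons_append, List.cons.injEq] at h2
          obtain ⟨rfl, rfl⟩ := h2
          subst h1
          have := Der.edge _ _ x a (c ++ (u ++ q)) ha (ihv c q rfl)
          simpa [add_left_comm] using this
      · subst h1 h2
        have := Der.edge _ _ x (p ++ (u ++ c)) v (iha p c rfl) hv
        simpa [add_assoc] using this
  | face j' x y w hP hw ih =>
    intro p q h
    rcases p with _ | ⟨x', p⟩
    · simp only [List.nil_append] at h ⊢
      subst h
      exact hu.append (Der.face _ _ _ _ hP hw)
    · simp only [List.cons_append, List.cons.injEq] at h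
      obtain ⟨rfl, rfl⟩ := h
      have := Der.face _ x y (p ++ (u ++ q)) hP (by simpa using ih (invRev y ++ p) q (by simp))
      simpa [add_assoc] using this

/-- `b b⁻¹` is derivable without cells, in conjugated form. -/
theorem Der.conj {j : ℕ} {u : List (α × Bool)} (hu : Der P j u) (b : List (α × Bool)) :
    Der P j (invRev b ++ (u ++ b)) := by
  induction b generalizing u with
  | nil => simpa using hu
  | cons x b ih =>
    have h := Der.edge _ 0 (bar x) u [] hu (Der.nil 0)
    have h2 := ih h
    simpa [invRev_cons', bar_bar] using h2

theorem Der.conj' {j : ℕ} {u : List (α × Bool)} (hu : Der P j u) (b : List (α × Bool)) :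
    Der P j (b ++ (u ++ invRev b)) := by
  have := hu.conj (invRev b)
  simpa using this

/-- Rotation closure at a level. -/
def RotAt (P : List (α × Bool) → Prop) (j : ℕ) : Prop :=
  ∀ a b : List (α × Bool), Der P j (a ++ b) → Der P j (b ++ a)

/-- Replacement closure at a level. -/
def RepAt (P : List (α × Bool) → Prop) (j : ℕ) : Prop :=
  ∀ p s q b : List (α × Bool), P (b ++ invRev s) → Der P j (p ++ (s ++ q)) →
    Der P (j + 1) (p ++ (b ++ q))

theorem repAt_of_rot (hrot : ∀ a b, P (a ++ b) → P (b ++ a))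
    (hinv : ∀ a, P a → P (invRev a)) (J : ℕ) (hR : ∀ j ≤ J, RotAt P j) :
    ∀ j ≤ J, RepAt P j := by
  intro j
  induction j using Nat.strong_induction_on with
  | _ j ihj =>
  intro hjJ
  suffices H : ∀ N : ℕ, ∀ j' ≤ j, ∀ p s q b : List (α × Bool), (p ++ (s ++ q)).length ≤ N →
      P (b ++ invRev s) → Der P j' (p ++ (s ++ q)) → Der P (j' + 1) (p ++ (b ++ q)) from
    fun p s q b hP h => H _ j le_rfl p s q b le_rfl hP h
  intro N
  induction N with
  | zero =>
    intro j' hj' p s q b hN hP h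
    have : p ++ (s ++ q) = [] := List.eq_nil_of_length_eq_zero (by omega)
    simp only [List.append_eq_nil_iff] at this
    obtain ⟨rfl, rfl, rfl⟩ := this
    rcases b with _ | ⟨x, b⟩
    · exact Der.nil _
    · refine Der.face _ x b _ (by simpa using hP) ?_
      simpa using ((Der.nil j').conj b)
  | succ N ihN =>
    -- the case of a non-empty prefix
    have key : ∀ j' ≤ j, ∀ x, ∀ p s q b : List (α × Bool),
        (x :: p ++ (s ++ q)).length ≤ N + 1 → P (b ++ invRev s) →
        Der P j' (x :: p ++ (s ++ q)) → Der P (j' + 1) (x :: p ++ (b ++ q)) := by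
      intro j' hj' x p s q b hN hP h
      have hN' : p.length + (s.length + q.length) ≤ N := by
        simp at hN; omega
      rcases Der.inv h with ⟨j1, j2, u, v, hj, hw, hu, hv⟩ | ⟨j1, y, hj, hPy, hw⟩
      · rcases List.append_eq_append_iff.1 hw with ⟨c, h1, h2⟩ | ⟨c, h1, h2⟩
        · -- `u = p ++ c`
          rcases List.append_eq_append_iff.1 h2 with ⟨d, h3, h4⟩ | ⟨d, h3, h4⟩
          · -- `c = s ++ d`
            subst h1 h3 h4
            have := ihN j1 (by omega) p s d b (by simp at hN' ⊢; omega) hP hu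
            have := Der.edge _ _ x _ _ this hv
            refine Der.mono (k := j' + 1) (by simpa using this) (by omega)
          · rcases d with _ | ⟨z, d⟩
            · simp only [List.nil_append, List.append_nil] at h3 h4
              subst h1 h3 h4
              have := ihN j1 (by omega) p s [] b (by simp at hN' ⊢; omega) hP (by simpa using hu)
              have := Der.edge _ _ x _ _ this hv
              refine Der.mono (k := j' + 1) (by simpa using this) (by omega)
            · simp only [List.cons_append, List.cons.injEq] at h4
              obtain ⟨rfl, rfl⟩ := h4
              subst h1 h3
              have e1 := hR j1 (by omega) _ _ hu
              have e2 := e1.conj b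
              have e3 := e2.insert hv d q rfl
              refine Der.face j' x (invRev c ++ (b ++ invRev d)) _ ?_ ?_
              · have h5 : P ((b ++ invRev d) ++ (x :: invRev c)) := by
                  simpa [invRev_cons', bar_bar] using hP
                simpa using hrot _ _ h5
              · refine Der.mono (j := j1 + j2) ?_ (by omega)
                simpa using e3
        · -- `p = u ++ c`
          rcases c with _ | ⟨z, c⟩
          · simp only [List.nil_append, List.append_nil] at h1 h2
            subst h1
            rcases s with _ | ⟨z, s⟩
            · simp only [List.nil_append] at h2
              subst h2
              have := ihN j1 (by omega) p [] [] b (by simp at hN' ⊢; omega) hP (by simpa using hu)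
              have := Der.edge _ _ x _ _ this hv
              refine Der.mono (k := j' + 1) (by simpa using this) (by omega)
            · simp only [List.cons_append, List.cons.injEq] at h2
              obtain ⟨rfl, rfl⟩ := h2
              have e2 := hu.conj b
              have e3 := e2.insert hv s q rfl
              refine Der.face j' x (b ++ invRev s) _ ?_ ?_
              · have h5 : P ((b ++ invRev s) ++ [x]) := by
                  simpa [invRev_cons', bar_bar] using hP
                simpa using hrot _ _ h5
              · refine Der.mono (j := j1 + j2) ?_ (by omega)
                simpa using e3
          · simp only [List.cons_append, List.cons.injEq] at h2
            obtain ⟨rfl, rfl⟩ := h2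
            subst h1
            have := ihN j2 (by omega) c s q b (by simp at hN' ⊢; omega) hP hv
            have := Der.edge _ _ x _ _ hu this
            refine Der.mono (k := j' + 1) (by simpa using this) (by omega)
      · subst hj
        have := ihj j1 (by omega) (by omega) (invRev y ++ p) s q b hP (by simpa using hw)
        exact Der.face _ x y _ hPy (by simpa using this)
    intro j' hj' p s q b hN hP h
    rcases p with _ | ⟨x, p⟩
    · rcases b with _ | ⟨x, b⟩
      · rcases q with _ | ⟨z, q⟩
        · exact Der.nil _
        · have h' := hR j' (by omega) s (z :: q) (by simpa using h)
          have := key j' hj' z q s [] [] (by simp at hN ⊢; omega) hP (by simpa using h')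
          simpa using this
      · refine Der.face j' x (b ++ invRev s) _ (by simpa using hP) ?_
        have := ((Der.nil (P := P) 0).conj b).insert (W := s ++ q) (by simpa using h) s q rfl
        simpa using this
    · exact key j' hj' x p s q b hN hP h

theorem rotAt_of_single {j : ℕ}
    (h : ∀ (x : α × Bool) (w : List (α × Bool)), Der P j (x :: w) → Der P j (w ++ [x])) :
    RotAt P j := by
  intro a
  induction a with
  | nil => intro b hb; simpa using hb
  | cons x a ih =>
    intro b hb
    have := ih (b ++ [x]) (by simpa using h x _ hb)
    simpa using this

theorem rotAt (hrot : ∀ a b, P (a ++ b) → P (b ++ a))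
    (hinv : ∀ a, P a → P (invRev a)) (j : ℕ) : RotAt P j := by
  induction j using Nat.strong_induction_on with
  | _ j ih =>
  apply rotAt_of_single
  intro x w h
  rcases Der.inv h with ⟨j1, j2, u, v, rfl, rfl, hu, hv⟩ | ⟨j1, y, rfl, hPy, hw⟩
  · have := Der.edge _ 0 (bar x) v [] hv (Der.nil 0)
    have := hu.append this
    simpa [bar_bar] using this
  · have h1 := ih j1 (by omega) _ _ hw
    have h2 := repAt_of_rot hrot hinv j1 (fun k hk => ih k (by omega)) j1 le_rfl
      w (invRev y) [] [x] (by simpa using hPy) (by simpa using h1)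
    simpa using h2

theorem repAt (hrot : ∀ a b, P (a ++ b) → P (b ++ a))
    (hinv : ∀ a, P a → P (invRev a)) (j : ℕ) : RepAt P j :=
  repAt_of_rot hrot hinv j (fun k _ => rotAt hrot hinv k) j le_rfl

/-- Derivability is closed under free cancellation. -/
theorem Der.cancel (hrot : ∀ a b, P (a ++ b) → P (b ++ a))
    (hinv : ∀ a, P a → P (invRev a)) {j : ℕ} {W : List (α × Bool)} (hW : Der P j W) :
    ∀ (p : List (α × Bool)) (x : α × Bool) (q : List (α × Bool)),
      W = p ++ x :: bar x :: q → Der P j (p ++ q) := by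
  induction hW with
  | nil => intro p x q h; simp at h
  | edge j1 j2 a u v hu hv ihu ihv =>
    intro p x q h
    rcases p with _ | ⟨a', p⟩
    · simp only [List.nil_append, List.cons.injEq] at h ⊢
      obtain ⟨rfl, h⟩ := h
      rcases u with _ | ⟨z, u⟩
      · simp only [List.nil_append, List.cons.injEq, true_and] at h
        subst h
        exact hv.mono (by omega)
      · simp only [List.cons_append, List.cons.injEq] at h
        obtain ⟨rfl, rfl⟩ := h
        have := (rotAt hrot hinv j1 [bar a] u (by simpa using hu)).append hv
        simpa using this
    · simp only [List.cons_append, List.cons.injEq] at h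
      obtain ⟨rfl, h⟩ := h
      rcases List.append_eq_append_iff.1 h with ⟨c, h1, h2⟩ | ⟨c, h1, h2⟩
      · -- `p = u ++ c`
        rcases c with _ | ⟨z, c⟩
        · simp only [List.nil_append, List.append_nil, List.cons.injEq] at h1 h2
          obtain ⟨rfl, rfl⟩ := h2
          subst h1
          rw [bar_bar] at hv
          have := hu.insert hv [a] q rfl
          simpa using this
        · simp only [List.cons_append, List.cons.injEq] at h2
          obtain ⟨rfl, rfl⟩ := h2
          subst h1
          have := Der.edge _ _ a _ _ hu (ihv c x q rfl)
          simpa using this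
      · -- `u = p ++ c`
        subst h1
        rcases c with _ | ⟨z, c⟩
        · simp only [List.nil_append, List.append_nil, List.cons.injEq] at h2 hu
          obtain ⟨rfl, rfl⟩ := h2
          rw [bar_bar] at hv
          have := hu.insert hv [a] q rfl
          simpa using this
        · simp only [List.cons_append, List.cons.injEq] at h2
          obtain ⟨rfl, h2⟩ := h2
          rcases c with _ | ⟨z, c⟩
          · simp only [List.nil_append, List.cons.injEq] at h2
            obtain ⟨hb, rfl⟩ := h2
            have hax : a = x := by
              have := congrArg bar hb
              simpa [bar_bar] using this.symm
            subst hax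
            have := (rotAt hrot hinv j1 p [a] hu).append hv
            simpa using this
          · simp only [List.cons_append, List.cons.injEq] at h2
            obtain ⟨rfl, rfl⟩ := h2
            have := Der.edge _ _ a _ _ (ihu p x c rfl) hv
            simpa using this
  | face j' a y w hP hw ih =>
    intro p x q h
    rcases p with _ | ⟨a', p⟩
    · simp only [List.nil_append, List.cons.injEq] at h ⊢
      obtain ⟨rfl, rfl⟩ := h
      have := repAt hrot hinv j' [] (invRev y ++ [bar a]) q []
        (by simpa [invRev_cons', bar_bar] using hP) (by simpa using hw)
      simpa using this
    · simp only [List.cons_append, List.cons.injEq] at h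
      obtain ⟨rfl, rfl⟩ := h
      exact Der.face _ _ y _ hP (by simpa using ih (invRev y ++ p) x q (by simp))

theorem Der.of_red (hrot : ∀ a b, P (a ++ b) → P (b ++ a))
    (hinv : ∀ a, P a → P (invRev a)) {j : ℕ} {w w' : List (α × Bool)} (h : Red w w')
    (hw : Der P j w) : Der P j w' := by
  induction h with
  | refl => exact hw
  | tail _ hs ih =>
    cases hs with
    | not => exact Der.cancel hrot hinv ih _ _ _ rfl

theorem Der.of_red' {j : ℕ} {w w' : List (α × Bool)} (h : Red w w')
    (hw : Der P j w') : Der P j w := by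
  induction h using Relation.ReflTransGen.head_induction_on with
  | refl => exact hw
  | head hs _ ih =>
    cases hs with
    | @not p q x b =>
      have h2 : Der P 0 [(x, b), (x, !b)] := by
        have := Der.edge 0 0 (x, b) [] [] (Der.nil (P := P) 0) (Der.nil 0)
        simpa [bar] using this
      have := h2.insert ih p q rfl
      simpa using this

/-- Derivability only depends on the free group element. -/
theorem Der.of_mk_eq (hrot : ∀ a b, P (a ++ b) → P (b ++ a))
    (hinv : ∀ a, P a → P (invRev a)) {j : ℕ} {w w' : List (α × Bool)}
    (h : FreeGroup.mk w = FreeGroup.mk w') (hw : Der P j w) : Der P j w' := by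
  obtain ⟨c, h1, h2⟩ := Red.exact.1 h
  exact Der.of_red' h2 (Der.of_red hrot hinv h1 hw)

theorem Der.of_P {w : List (α × Bool)} (h : P w) : Der P 1 w := by
  rcases w with _ | ⟨x, y⟩
  · exact Der.nil _
  · refine Der.face 0 x y y h ?_
    simpa using (Der.nil (P := P) 0).conj y

/-- Words which are cyclic rotations of words of relators or of their inverses. -/
def CycRel [DecidableEq α] (R : Finset (FreeGroup α)) (w : List (α × Bool)) : Prop :=
  ∃ r ∈ R, w ~r r.toWord ∨ w ~r invRev r.toWord

section stepping

variable [DecidableEq α]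

theorem cycRel_rot (R : Finset (FreeGroup α)) (a b : List (α × Bool)) (h : CycRel R (a ++ b)) :
    CycRel R (b ++ a) := by
  obtain ⟨r, hr, h⟩ := h
  have e : (b ++ a) ~r (a ++ b) := ⟨b.length, by simp⟩
  exact ⟨r, hr, h.imp (fun h => e.trans h) (fun h => e.trans h)⟩

theorem isRotated_invRev {a b : List (α × Bool)} (h : a ~r b) : invRev a ~r invRev b := by
  unfold invRev
  exact (h.map _).reverse

theorem cycRel_inv (R : Finset (FreeGroup α)) (a : List (α × Bool)) (h : CycRel R a) :
    CycRel R (invRev a) := by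
  obtain ⟨r, hr, h⟩ := h
  refine ⟨r, hr, ?_⟩
  rcases h with h | h
  · exact Or.inr (isRotated_invRev h)
  · left; simpa using isRotated_invRev h

theorem mk_mem_of_rot {N : Subgroup (FreeGroup α)} [hN : N.Normal] {a b : List (α × Bool)}
    (h : a ~r b) (hb : FreeGroup.mk b ∈ N) : FreeGroup.mk a ∈ N := by
  obtain ⟨k, rfl⟩ := h
  rw [List.rotate_eq_drop_append_take_mod, ← FreeGroup.mul_mk] at hb
  have := hN.mem_comm hb
  rwa [FreeGroup.mul_mk, List.take_append_drop] at this

theorem cycRel_mem (R : Finset (FreeGroup α)) {a : List (α × Bool)} (h : CycRel R a) :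
    FreeGroup.mk a ∈ Subgroup.normalClosure (↑R : Set (FreeGroup α)) := by
  obtain ⟨r, hr, h⟩ := h
  have hmem : r ∈ Subgroup.normalClosure (↑R : Set (FreeGroup α)) :=
    Subgroup.subset_normalClosure hr
  rcases h with h | h
  · exact mk_mem_of_rot h (by rwa [FreeGroup.mk_toWord])
  · refine mk_mem_of_rot h ?_
    rw [← FreeGroup.inv_mk, FreeGroup.mk_toWord]
    exact inv_mem hmem

theorem cycRel_finite (R : Finset (FreeGroup α)) : {w | CycRel R w}.Finite := by
  have : {w | CycRel R w} ⊆ ⋃ r ∈ R, ((r.toWord.cyclicPermutations.toFinset ∪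
      (invRev r.toWord).cyclicPermutations.toFinset : Finset (List (α × Bool))) :
        Set (List (α × Bool))) := by
    rintro w ⟨r, hr, h⟩
    simp only [Set.mem_iUnion]
    refine ⟨r, hr, ?_⟩
    simpa [List.mem_cyclicPermutations_iff] using h
  refine Set.Finite.subset ?_ this
  exact Set.Finite.biUnion (Finset.finite_toSet R) (fun r _ => Finset.finite_toSet _)

/-- A product of `m` conjugates of relators is derivable with `m` cells. -/
theorem der_prod (R : Finset (FreeGroup α)) (m : ℕ) (c r : Fin m → FreeGroup α) (ε : Fin m → ℤ)
    (hr : ∀ i, r i ∈ R) (hε : ∀ i, ε i = 1 ∨ ε i = -1) :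
    ∃ w, Der (CycRel R) m w ∧ FreeGroup.mk w =
      (List.ofFn (fun i : Fin m => (c i)⁻¹ * (r i) ^ (ε i) * c i)).prod := by
  induction m with
  | zero => exact ⟨[], Der.nil _, by simp [FreeGroup.one_eq_mk]⟩
  | succ m ih =>
    obtain ⟨w, hw, hwe⟩ := ih (fun i => c i.succ) (fun i => r i.succ) (fun i => ε i.succ)
      (fun i => hr _) (fun i => hε _)
    obtain ⟨s, hs, hse⟩ : ∃ s, CycRel R s ∧ FreeGroup.mk s = (r 0) ^ (ε 0) := by
      rcases hε 0 with h | h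
      · exact ⟨(r 0).toWord, ⟨r 0, hr 0, Or.inl (List.IsRotated.refl _)⟩, by
          rw [h, FreeGroup.mk_toWord, zpow_one]⟩
      · exact ⟨invRev (r 0).toWord, ⟨r 0, hr 0, Or.inr (List.IsRotated.refl _)⟩, by
          rw [h, ← FreeGroup.inv_mk, FreeGroup.mk_toWord, zpow_neg, zpow_one]⟩
    refine ⟨(invRev (c 0).toWord ++ (s ++ (c 0).toWord)) ++ w, ?_, ?_⟩
    · exact (((Der.of_P hs).conj _).append hw).mono (by omega)
    · rw [List.ofFn_succ, List.prod_cons, ← hwe, ← FreeGroup.mul_mk, ← FreeGroup.mul_mk,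
        ← FreeGroup.mul_mk, ← FreeGroup.inv_mk, FreeGroup.mk_toWord, hse]
      simp only [mul_assoc]

end stepping

section search

variable [DecidableEq α]

/-- All words obtained from `w` by one application of a rewriting rule in `Q`. -/
def succs (Q : List (List (α × Bool) × List (α × Bool))) (w : List (α × Bool)) :
    List (List (α × Bool)) :=
  (List.range (w.length + 1)).flatMap fun i => Q.flatMap fun e =>
    if (w.drop i).take e.1.length = e.1 then
      [w.take i ++ (e.2 ++ (w.drop i).drop e.1.length)] else []

theorem mem_succs (Q : List (List (α × Bool) × List (α × Bool))) (w w' : List (α × Bool)) :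
    w' ∈ succs Q w ↔ ∃ p l r q, (l, r) ∈ Q ∧ w = p ++ (l ++ q) ∧ w' = p ++ (r ++ q) := by
  unfold succs
  simp only [List.mem_flatMap, List.mem_range]
  constructor
  · rintro ⟨i, hi, ⟨l, r⟩, hQ, h⟩
    split_ifs at h with hc
    · simp only [List.mem_singleton] at h
      refine ⟨w.take i, l, r, (w.drop i).drop l.length, hQ, ?_, h⟩
      conv_lhs => rw [← List.take_append_drop i w, ← List.take_append_drop l.length (w.drop i)]
      simp only at hc
      rw [hc]
    · simp at h
  · rintro ⟨p, l, r, q, hQ, rfl, rfl⟩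
    refine ⟨p.length, by simp, (l, r), hQ, ?_⟩
    simp

/-- `w` rewrites to the empty word in `t` steps. -/
inductive Reach (Q : List (List (α × Bool) × List (α × Bool))) : ℕ → List (α × Bool) → Prop
  | zero : Reach Q 0 []
  | succ (t : ℕ) (p l r q : List (α × Bool)) : (l, r) ∈ Q → Reach Q t (p ++ (r ++ q)) →
      Reach Q (t + 1) (p ++ (l ++ q))

theorem reach_iff (Q : List (List (α × Bool) × List (α × Bool))) (t : ℕ) :
    ∀ S : List (List (α × Bool)), (∃ v ∈ S, Reach Q t v) ↔
      ∃ a ∈ (fun S : List (List (α × Bool)) => S.flatMap (succs Q))^[t] S, a = [] := by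
  induction t with
  | zero =>
    intro S
    constructor
    · rintro ⟨v, hv, h⟩
      cases h
      exact ⟨[], hv, rfl⟩
    · rintro ⟨v, hv, rfl⟩
      exact ⟨[], hv, Reach.zero⟩
  | succ t ih =>
    intro S
    rw [Function.iterate_succ_apply, ← ih]
    constructor
    · rintro ⟨v, hv, h⟩
      cases h with
      | succ _ p l r q hQ h =>
        exact ⟨_, List.mem_flatMap.2 ⟨_, hv, (mem_succs _ _ _).2 ⟨p, l, r, q, hQ, rfl, rfl⟩⟩, h⟩
    · rintro ⟨v, hv, h⟩
      obtain ⟨w, hw, hv⟩ := List.mem_flatMap.1 hv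
      obtain ⟨p, l, r, q, hQ, rfl, rfl⟩ := (mem_succs _ _ _).1 hv
      exact ⟨_, hw, Reach.succ t p l r q hQ h⟩

theorem Reach.mem {Q : List (List (α × Bool) × List (α × Bool))} {N : Subgroup (FreeGroup α)}
    [hN : N.Normal] (hQ : ∀ l r, (l, r) ∈ Q → FreeGroup.mk l * (FreeGroup.mk r)⁻¹ ∈ N)
    {t : ℕ} {w : List (α × Bool)} (h : Reach Q t w) : FreeGroup.mk w ∈ N := by
  induction h with
  | zero => exact one_mem N
  | succ t p l r q hm _ ih =>
    have h1 := hN.conj_mem _ (hQ l r hm) (FreeGroup.mk p)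
    have h2 := mul_mem h1 ih
    have e : FreeGroup.mk (p ++ (l ++ q)) = FreeGroup.mk p *
        (FreeGroup.mk l * (FreeGroup.mk r)⁻¹) * (FreeGroup.mk p)⁻¹ *
        FreeGroup.mk (p ++ (r ++ q)) := by
      rw [← FreeGroup.mul_mk, ← FreeGroup.mul_mk, ← FreeGroup.mul_mk, ← FreeGroup.mul_mk]
      group
    rwa [e]

theorem Reach.mono_add {Q : List (List (α × Bool) × List (α × Bool))} (h0 : ([], []) ∈ Q)
    {t : ℕ} {w : List (α × Bool)} (h : Reach Q t w) (k : ℕ) : Reach Q (t + k) w := by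
  induction k with
  | zero => exact h
  | succ k ih => exact Reach.succ (t + k) [] [] [] w h0 ih

theorem Reach.mono {Q : List (List (α × Bool) × List (α × Bool))} (h0 : ([], []) ∈ Q)
    {t t' : ℕ} {w : List (α × Bool)} (h : Reach Q t w) (ht : t ≤ t') : Reach Q t' w := by
  obtain ⟨d, rfl⟩ := Nat.exists_eq_add_of_le ht
  exact h.mono_add h0 d

theorem Reach.context {Q : List (List (α × Bool) × List (α × Bool))}
    {t t' : ℕ} {u a b : List (α × Bool)} (h : Reach Q t u) (h' : Reach Q t' (a ++ b)) :
    Reach Q (t + t') (a ++ (u ++ b)) := by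
  induction h with
  | zero => simpa using h'
  | succ t p l r q hQ _ ih =>
    have := Reach.succ (t + t') (a ++ p) l r (q ++ b) hQ (by simpa using ih)
    rw [add_right_comm]
    simpa using this

theorem Der.reach {Q : List (List (α × Bool) × List (α × Bool))} (h0 : ([], []) ∈ Q)
    (h1 : ∀ x, ([x, bar x], []) ∈ Q) (h2 : ∀ x y, P (x :: y) → ([x], invRev y) ∈ Q)
    (K : ℕ) (hK : ∀ w, P w → w.length ≤ K) {j : ℕ} {w : List (α × Bool)} (h : Der P j w) :
    Reach Q (w.length + j * K) w := by
  induction h with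
  | nil j => exact Reach.zero.mono h0 (Nat.zero_le _)
  | edge j k x u v hu hv ihu ihv =>
    have e1 := Reach.succ _ [] [x, bar x] [] v (h1 x) (by simpa using ihv)
    have e2 := ihu.context (a := [x]) (b := bar x :: v) (by simpa using e1)
    refine Reach.mono h0 (by simpa using e2) ?_
    simp only [List.length_cons, List.length_append, add_mul]
    omega
  | face j x y w hP hw ih =>
    have e1 := Reach.succ _ [] [x] (invRev y) w (h2 x y hP) (by simpa using ih)
    have := hK _ hP
    refine Reach.mono h0 (by simpa using e1) ?_
    simp only [List.length_cons, List.length_append, add_mul] at this ⊢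
    omega

theorem exists_rules [Fintype α] (R : Finset (FreeGroup α)) :
    ∃ Q : List (List (α × Bool) × List (α × Bool)),
      ([], []) ∈ Q ∧ (∀ x, ([x, bar x], []) ∈ Q) ∧
      (∀ x y, CycRel R (x :: y) → ([x], invRev y) ∈ Q) ∧
      (∀ l r, (l, r) ∈ Q → FreeGroup.mk l * (FreeGroup.mk r)⁻¹ ∈
        Subgroup.normalClosure (↑R : Set (FreeGroup α))) := by
  set T : Set (List (α × Bool) × List (α × Bool)) := {([], [])} ∪
    (Set.range (fun x : α × Bool => ([x, bar x], []))) ∪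
    ((fun w : List (α × Bool) => (w.take 1, invRev (w.drop 1))) '' {w | CycRel R w}) with hT
  have hfin : T.Finite :=
    ((Set.finite_singleton _).union (Set.finite_range _)).union ((cycRel_finite R).image _)
  refine ⟨hfin.toFinset.toList, ?_, ?_, ?_, ?_⟩
  · simp [hT]
  · intro x; simp [hT]
  · intro x y h
    rw [Finset.mem_toList, Set.Finite.mem_toFinset]
    exact Or.inr ⟨x :: y, h, by simp⟩
  · intro l r h
    rw [Finset.mem_toList, Set.Finite.mem_toFinset] at h
    rcases h with (h | ⟨x, h⟩) | ⟨w, hw, h⟩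
    · simp only [Set.mem_singleton_iff, Prod.mk.injEq] at h
      obtain ⟨rfl, rfl⟩ := h
      rw [mul_inv_cancel]
      exact one_mem _
    · simp only [Prod.mk.injEq] at h
      obtain ⟨rfl, rfl⟩ := h
      have : FreeGroup.mk [x, bar x] = 1 := by
        rw [FreeGroup.one_eq_mk]
        exact Red.exact.2 ⟨[], Relation.ReflTransGen.single
          (Red.Step.not (L₁ := []) (L₂ := []) (x := x.1) (b := x.2)), Relation.ReflTransGen.refl⟩
      rw [this, ← FreeGroup.one_eq_mk]
      simp
    · simp only [Prod.mk.injEq] at h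
      obtain ⟨rfl, rfl⟩ := h
      rw [FreeGroup.inv_mk, FreeGroup.invRev_invRev, FreeGroup.mul_mk, List.take_append_drop]
      exact cycRel_mem R hw

theorem exists_length_bound (R : Finset (FreeGroup α)) :
    ∃ K : ℕ, ∀ w, CycRel R w → w.length ≤ K := by
  obtain ⟨K, hK⟩ := ((cycRel_finite R).image List.length).bddAbove
  exact ⟨K, fun w hw => hK ⟨w, hw, rfl⟩⟩

end search

/-- Partial sums of `f`, a monotone computable bound. -/
def psum (f : ℕ → ℕ) (N : ℕ) : ℕ := Nat.rec (f 0) (fun k acc => acc + f (k + 1)) N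

theorem le_psum (f : ℕ → ℕ) {k N : ℕ} (h : k ≤ N) : f k ≤ psum f N := by
  induction N with
  | zero => obtain rfl : k = 0 := by omega
            exact le_rfl
  | succ N ih =>
    change f k ≤ psum f N + f (N + 1)
    rcases Nat.lt_or_ge N k with h' | h'
    · obtain rfl : k = N + 1 := by omega
      omega
    · have := ih h'
      omega

theorem psum_computable {f : ℕ → ℕ} (hf : Computable f) : Computable (psum f) := by
  have h : Computable₂ (fun (_ : ℕ) (p : ℕ × ℕ) => p.2 + f (p.1 + 1)) :=
    (Primrec.nat_add.to_comp.comp (Computable.snd.comp Computable.snd)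
      (hf.comp (Computable.succ.comp (Computable.fst.comp Computable.snd)))).to₂
  exact Computable.nat_rec Computable.id (Computable.const (f 0)) h

theorem succs_primrec {n : ℕ} (Q : List (List (Fin n × Bool) × List (Fin n × Bool))) :
    Primrec (succs Q) := by
  unfold succs
  refine Primrec.list_flatMap (Primrec.list_range.comp (Primrec.succ.comp Primrec.list_length)) ?_
  refine Primrec.list_flatMap (Primrec.const Q) ?_
  have hw : Primrec fun a : (List (Fin n × Bool) × ℕ) ×
      (List (Fin n × Bool) × List (Fin n × Bool)) => a.1.1 := Primrec.fst.comp Primrec.fst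
  have hi : Primrec fun a : (List (Fin n × Bool) × ℕ) ×
      (List (Fin n × Bool) × List (Fin n × Bool)) => a.1.2 := Primrec.snd.comp Primrec.fst
  have hl : Primrec fun a : (List (Fin n × Bool) × ℕ) ×
      (List (Fin n × Bool) × List (Fin n × Bool)) => a.2.1 := Primrec.fst.comp Primrec.snd
  have hr : Primrec fun a : (List (Fin n × Bool) × ℕ) ×
      (List (Fin n × Bool) × List (Fin n × Bool)) => a.2.2 := Primrec.snd.comp Primrec.snd
  have hd := Primrec.list_drop.comp hi hw
  have hlen := Primrec.list_length.comp hl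
  refine Primrec.ite (Primrec.eq.comp (Primrec.list_take.comp hlen hd) hl) ?_ (Primrec.const [])
  exact Primrec.list_cons.comp (Primrec.list_append.comp (Primrec.list_take.comp hi hw)
    (Primrec.list_append.comp hr (Primrec.list_drop.comp hlen hd))) (Primrec.const [])

theorem reach_computable {n : ℕ} (Q : List (List (Fin n × Bool) × List (Fin n × Bool)))
    {T : List (Fin n × Bool) → ℕ} (hT : Computable T) :
    ComputablePred fun w => Reach Q (T w) w := by
  have h1 : Primrec₂ fun (t : ℕ) (w : List (Fin n × Bool)) =>
      (fun S : List (List (Fin n × Bool)) => S.flatMap (succs Q))^[t] [w] := by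
    refine Primrec.nat_iterate Primrec.fst
      (Primrec.list_cons.comp Primrec.snd (Primrec.const [])) ?_
    exact Primrec.list_flatMap Primrec.snd ((succs_primrec Q).comp Primrec.snd)
  have h2 : PrimrecPred fun L : List (List (Fin n × Bool)) => ∃ a ∈ L, a = [] :=
    PrimrecPred.exists_mem_list (Primrec.eq.comp Primrec.id (Primrec.const []))
  obtain ⟨_, h3⟩ := h2
  have h4 := h3.to_comp.comp (h1.to_comp.comp hT Computable.id)
  refine ComputablePred.of_eq (Computable.computablePred h4) fun w => ?_
  refine (reach_iff Q (T w) [w]).symm.trans ?_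
  simp

end WordProb

/-- If the isoperimetric function of a finite presentation `⟨Fin n; R⟩` is bounded
by a computable function (of the length of the reduced word), then the word problem
of the presented group is decidable. -/
theorem word_problem_decidable_of_computable_isoperimetric_bound
    (n : ℕ) (R : Finset (FreeGroup (Fin n)))
    (h : ∃ f : ℕ → ℕ, Computable f ∧
      ∀ w ∈ Subgroup.normalClosure (↑R : Set (FreeGroup (Fin n))),
        ∃ m : ℕ, m ≤ f (FreeGroup.toWord w).length ∧
          ∃ c r : Fin m → FreeGroup (Fin n), ∃ ε : Fin m → ℤ,
            (∀ i, r i ∈ R) ∧ (∀ i, ε i = 1 ∨ ε i = -1) ∧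
            w = (List.ofFn (fun i : Fin m => (c i)⁻¹ * (r i) ^ (ε i) * c i)).prod) :
    ComputablePred (fun l : List (Fin n × Bool) =>
      FreeGroup.mk l ∈ Subgroup.normalClosure (↑R : Set (FreeGroup (Fin n)))) := by
  obtain ⟨f, hf, hb⟩ := h
  obtain ⟨Q, h0, h1, h2, hQ⟩ := WordProb.exists_rules R
  obtain ⟨K, hK⟩ := WordProb.exists_length_bound R
  have hT : Computable fun l : List (Fin n × Bool) =>
      l.length + WordProb.psum f l.length * K :=
    Primrec.nat_add.to_comp.comp Computable.list_length
      (Primrec.nat_mul.to_comp.comp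
        ((WordProb.psum_computable hf).comp Computable.list_length) (Computable.const K))
  refine ComputablePred.of_eq (WordProb.reach_computable Q hT) fun l => ⟨fun h => ?_, fun h => ?_⟩
  · exact h.mem hQ
  · obtain ⟨m, hm, c, r, ε, hr, hε, hw⟩ := hb _ h
    obtain ⟨w, hd, he⟩ := WordProb.der_prod R m c r ε hr hε
    have hd' : WordProb.Der (WordProb.CycRel R) m l :=
      WordProb.Der.of_mk_eq (WordProb.cycRel_rot R) (WordProb.cycRel_inv R) (he.trans hw.symm) hd
    have hlen : (FreeGroup.toWord (FreeGroup.mk l)).length ≤ l.length := by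
      rw [FreeGroup.toWord_mk]
      exact FreeGroup.reduce.red.length_le
    have hm' : m ≤ WordProb.psum f l.length := hm.trans (WordProb.le_psum f hlen)
    exact WordProb.Der.reach h0 h1 h2 K hK (hd'.mono hm')
end

section
/- (Chiodo) There is no general procedure to pick a non-trivial generator from a finite presentation of a non-trivial group: there is no computable function g : ℕ × List (List (ℕ × Bool)) → ℕ such that for every encoded finite presentation P = (n, L) whose presented group G_P is nontrivial, one has g P < n and π_P (FreeGroup.of (g P)) ≠ 1 in G_P. -/
/-- The set of relators of the finite presentation encoded by
`P = (n, L) : ℕ × List (List (ℕ × Bool))`: the words in `L`, together with all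
generators `FreeGroup.of i` for `i ≥ n`. -/
def presRels (P : ℕ × List (List (ℕ × Bool))) : Set (FreeGroup ℕ) :=
  {r | ∃ w ∈ P.2, r = FreeGroup.mk w} ∪ {r | ∃ i : ℕ, P.1 ≤ i ∧ r = FreeGroup.of i}

/-- The group presented by an encoded finite presentation. -/
def presGroup (P : ℕ × List (List (ℕ × Bool))) : Type :=
  PresentedGroup (presRels P)

instance (P : ℕ × List (List (ℕ × Bool))) : Group (presGroup P) :=
  inferInstanceAs (Group (PresentedGroup (presRels P)))

/-- The canonical projection from the free group to the presented group. -/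
def presProj (P : ℕ × List (List (ℕ × Bool))) : FreeGroup ℕ →* presGroup P :=
  PresentedGroup.mk (presRels P)

open Monoid in
/-- The free group of rank two, as a coproduct of two infinite cyclic groups. -/
abbrev FTwo : Type := CoprodI (fun _ : Bool => Multiplicative ℤ)

/-- The homomorphism from the free group of rank two given by two elements. -/
def liftTwo {P : Type} [Group P] (a b : P) : FTwo →* P :=
  Monoid.CoprodI.lift (fun i => zpowersHom P (cond i a b))

/-- First generator. -/
def genA : FTwo := Monoid.CoprodI.of (i := true) (Multiplicative.ofAdd 1)
/-- Second generator. -/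
def genB : FTwo := Monoid.CoprodI.of (i := false) (Multiplicative.ofAdd 1)

theorem liftTwo_genA {P : Type} [Group P] (a b : P) : liftTwo a b genA = a := by
  simp [liftTwo, genA, zpowersHom_apply]

theorem liftTwo_genB {P : Type} [Group P] (a b : P) : liftTwo a b genB = b := by
  simp [liftTwo, genB, zpowersHom_apply]

theorem amalgam_free_aux {G : Bool → Type} [∀ i, Group (G i)] (φ : ∀ i, Multiplicative ℤ →* G i)
    (hφ : ∀ i, Function.Injective (φ i)) (h : ∀ i, G i)
    (hh : ∀ i (n : ℤ), h i ^ n ∈ (φ i).range → n = 0) :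
    Function.Injective (Monoid.CoprodI.lift
      (fun i => ((Monoid.PushoutI.of i).comp (zpowersHom (G i) (h i)) :
        Multiplicative ℤ →* Monoid.PushoutI φ))) := by
  classical
  rw [injective_iff_map_eq_one]
  intro x hx
  obtain ⟨w, rfl⟩ : ∃ w : Monoid.CoprodI.Word (fun _ : Bool => Multiplicative ℤ), w.prod = x :=
    ⟨Monoid.CoprodI.Word.equiv x, Monoid.CoprodI.Word.equiv.left_inv x⟩
  let F : (Σ _ : Bool, Multiplicative ℤ) → (Σ i, G i) :=
    fun l => ⟨l.1, zpowersHom (G l.1) (h l.1) l.2⟩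
  have key : ∀ l ∈ w.toList, (F l).2 ∉ (φ (F l).1).range := by
    intro l hl hm
    have := hh l.1 (Multiplicative.toAdd l.2) hm
    exact w.ne_one l hl (by simpa using this)
  let w' : Monoid.CoprodI.Word G :=
    { toList := w.toList.map F
      ne_one := by
        intro l hl
        obtain ⟨l0, h0, rfl⟩ := List.mem_map.1 hl
        intro h1
        exact key l0 h0 (h1 ▸ one_mem _)
      chain_ne := by
        rw [List.isChain_map]
        exact w.chain_ne }
  have hred : Monoid.PushoutI.Reduced φ w' := by
    intro g hg
    obtain ⟨l0, h0, rfl⟩ := List.mem_map.1 hg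
    exact key l0 h0
  have hprod : Monoid.PushoutI.ofCoprodI (φ := φ) w'.prod = 1 := by
    rw [← hx]
    simp only [Monoid.CoprodI.Word.prod, w', map_list_prod, List.map_map]
    congr 1
  have := hred.eq_empty_of_mem_range hφ (hprod ▸ one_mem _)
  have h2 : w.toList = [] := by
    have : w'.toList = [] := by rw [this]; rfl
    simpa [w'] using this
  simp [Monoid.CoprodI.Word.prod, h2]

/-- Two-element family of groups. -/
def AmG (G1 G2 : Type) : Bool → Type
  | true => G1
  | false => G2

instance (G1 G2 : Type) [i1 : Group G1] [i2 : Group G2] : ∀ i, Group (AmG G1 G2 i)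
  | true => i1
  | false => i2

theorem zpowersHom_inj {G : Type} [Group G] (c : G) (hc : ∀ n : ℤ, c ^ n = 1 → n = 0) :
    Function.Injective (zpowersHom G c) := by
  rw [injective_iff_map_eq_one]
  intro x hx
  have := hc (Multiplicative.toAdd x) (by simpa [zpowersHom_apply] using hx)
  simpa using this

theorem amalgam_free {G1 G2 : Type} [Group G1] [Group G2] (c1 : G1) (c2 : G2)
    (hc1 : ∀ n : ℤ, c1 ^ n = 1 → n = 0) (hc2 : ∀ n : ℤ, c2 ^ n = 1 → n = 0) :
    ∃ (P : Type) (_ : Group P) (i1 : G1 →* P) (i2 : G2 →* P),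
      Function.Injective i1 ∧ i1 c1 = i2 c2 ∧
      ∀ h1 h2, (∀ n m : ℤ, h1 ^ n = c1 ^ m → n = 0) → (∀ n m : ℤ, h2 ^ n = c2 ^ m → n = 0) →
        Function.Injective (liftTwo (i1 h1) (i2 h2)) := by
  let φ : ∀ i, Multiplicative ℤ →* AmG G1 G2 i := fun i => match i with
    | true => zpowersHom G1 c1
    | false => zpowersHom G2 c2
  have hφ : ∀ i, Function.Injective (φ i) := fun i => match i with
    | true => zpowersHom_inj c1 hc1
    | false => zpowersHom_inj c2 hc2
  refine ⟨Monoid.PushoutI φ, inferInstance, Monoid.PushoutI.of (φ := φ) true,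
    Monoid.PushoutI.of (φ := φ) false, Monoid.PushoutI.of_injective hφ true, ?_, ?_⟩
  · have e1 := Monoid.PushoutI.of_apply_eq_base φ true (Multiplicative.ofAdd 1)
    have e2 := Monoid.PushoutI.of_apply_eq_base φ false (Multiplicative.ofAdd 1)
    have f1 : φ true (Multiplicative.ofAdd 1) = c1 := zpow_one c1
    have f2 : φ false (Multiplicative.ofAdd 1) = c2 := zpow_one c2
    rw [f1] at e1
    rw [f2] at e2
    exact e1.trans e2.symm
  · intro h1 h2 hh1 hh2
    let h : ∀ i, AmG G1 G2 i := fun i => match i with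
      | true => h1
      | false => h2
    have hh : ∀ i (n : ℤ), h i ^ n ∈ (φ i).range → n = 0 := fun i n => match i with
      | true => by rintro ⟨m, hm⟩; exact hh1 n (Multiplicative.toAdd m) hm.symm
      | false => by rintro ⟨m, hm⟩; exact hh2 n (Multiplicative.toAdd m) hm.symm
    have := amalgam_free_aux φ hφ h hh
    convert this using 2
    apply Monoid.CoprodI.ext_hom
    intro i
    ext
    cases i
    · simp only [liftTwo, MonoidHom.comp_apply, Monoid.CoprodI.lift_of, zpowersHom_apply, h,
        toAdd_ofAdd, zpow_one, cond_false]
      exact congrArg _ (zpow_one h2).symm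
    · simp only [liftTwo, MonoidHom.comp_apply, Monoid.CoprodI.lift_of, zpowersHom_apply, h,
        toAdd_ofAdd, zpow_one, cond_true]
      exact congrArg _ (zpow_one h1).symm

/-- A free `F`-set structure on `G × N`. -/
theorem equivariant_split {F G N : Type} [Group F] [Group G] (f : F →* G)
    (hf : Function.Injective f) [Infinite N] (hN : Cardinal.mk G ≤ Cardinal.mk N) :
    ∃ e : G × N ≃ F × N, ∀ a g n, e (f a * g, n) = (a * (e (g, n)).1, (e (g, n)).2) := by
  obtain ⟨T, hT, h1⟩ := Subgroup.exists_isComplement_right f.range 1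
  have hcard : Cardinal.mk (T × N) = Cardinal.mk N := by
    rw [Cardinal.mk_prod, Cardinal.lift_id, Cardinal.lift_id]
    apply Cardinal.mul_eq_right (Cardinal.aleph0_le_mk N) ((Cardinal.mk_set_le T).trans hN)
    have : Nonempty T := ⟨⟨1, h1⟩⟩
    exact Cardinal.mk_ne_zero _
  obtain ⟨e0⟩ := Cardinal.eq.1 hcard
  let e1 : F × (T × N) ≃ G × N := Equiv.ofBijective (fun x => (f x.1 * x.2.1, x.2.2)) (by
    constructor
    · rintro ⟨a, t, n⟩ ⟨a', t', n'⟩ h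
      simp only [Prod.mk.injEq] at h
      obtain ⟨h, rfl⟩ := h
      have := @hT.1 (⟨f a, a, rfl⟩, t) (⟨f a', a', rfl⟩, t') h
      simp only [Prod.mk.injEq] at this
      rw [hf (congrArg Subtype.val this.1), this.2]
    · rintro ⟨g, n⟩
      obtain ⟨⟨⟨_, a, rfl⟩, t⟩, h⟩ := hT.2 g
      exact ⟨(a, t, n), by simpa using h⟩)
  refine ⟨e1.symm.trans (Equiv.prodCongr (Equiv.refl F) e0), ?_⟩
  intro a g n
  obtain ⟨⟨b, t, m⟩, h⟩ := e1.surjective (g, n)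
  have hh : (f b * t, m) = (g, n) := h
  have hn : n = m := (congrArg Prod.snd hh).symm
  have hg : g = f b * t := (congrArg Prod.fst hh).symm
  have h' : e1 (a * b, t, m) = (f a * g, n) := by
    show (f (a * b) * (t : G), m) = _
    rw [hg, hn, map_mul, mul_assoc]
  rw [← h', ← h]
  simp

theorem extend_action {F G Q N : Type} [Group F] [Group G] [Group Q] (f : F →* G) (q : F →* Q)
    (hf : Function.Injective f) (hq : Function.Injective q) [Infinite N]
    (hG : Cardinal.mk G ≤ Cardinal.mk N) (hQ : Cardinal.mk Q ≤ Cardinal.mk N) :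
    ∃ ψ : Q →* Equiv.Perm (G × N), ∀ a g n, ψ (q a) (g, n) = (f a * g, n) := by
  obtain ⟨e1, h1⟩ := equivariant_split f hf hG
  obtain ⟨e2, h2⟩ := equivariant_split q hq hQ
  let e := e2.trans e1.symm
  let L : Q →* Equiv.Perm (Q × N) :=
    { toFun := fun x => Equiv.prodCongr (Equiv.mulLeft x) (Equiv.refl N)
      map_one' := by ext <;> simp
      map_mul' := by intro x y; ext <;> simp [mul_assoc] }
  refine ⟨(e.permCongrHom.toMonoidHom).comp L, ?_⟩
  intro a g n
  obtain ⟨⟨x, m⟩, hx⟩ := e.surjective (g, n)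
  have hx' : e.symm (g, n) = (x, m) := by rw [← hx]; simp
  have : (((e.permCongrHom.toMonoidHom).comp L) (q a)) (g, n) = e (q a * x, m) := by
    show e ((L (q a)) (e.symm (g, n))) = _
    rw [hx']; rfl
  rw [this]
  show e1.symm (e2 (q a * x, m)) = _
  rw [Equiv.symm_apply_eq, h2, h1]
  have : e2 (x, m) = e1 (g, n) := by
    rw [← hx]; simp [e]
  rw [this]

/-- Translation of the rational line. -/
def trQ : Equiv.Perm ℚ := Equiv.addRight 1
/-- Halving on the rational line. -/
def halfQ : Equiv.Perm ℚ := (Equiv.mulRight₀ (2 : ℚ) (by norm_num)).symm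

theorem bs_rel : halfQ⁻¹ * trQ * halfQ = trQ ^ 2 := by
  ext x
  simp [halfQ, trQ, pow_two, Equiv.Perm.inv_def]
  ring

theorem trQ_zpow (n : ℤ) (x : ℚ) : (trQ ^ n) x = x + n := by
  induction n using Int.induction_on generalizing x with
  | zero => simp
  | succ n ih => rw [zpow_add_one, Equiv.Perm.mul_apply, ih]; simp [trQ]; ring
  | pred n ih => rw [zpow_sub_one, Equiv.Perm.mul_apply, ih]; simp [trQ, Equiv.Perm.inv_def]; ring

theorem halfQ_zpow (n : ℤ) (x : ℚ) : (halfQ ^ n) x = x * (2 : ℚ) ^ (-n) := by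
  induction n using Int.induction_on generalizing x with
  | zero => simp
  | succ n ih =>
    rw [zpow_add_one, Equiv.Perm.mul_apply, ih, neg_add, zpow_add₀ (by norm_num)]
    simp [halfQ]; ring
  | pred n ih =>
    rw [zpow_sub_one, Equiv.Perm.mul_apply, ih, neg_sub, sub_eq_add_neg, zpow_add₀ (by norm_num)]
    simp [halfQ, Equiv.Perm.inv_def]; ring

theorem trQ_half (n m : ℤ) (h : trQ ^ n = halfQ ^ m) : n = 0 := by
  have := congrArg (fun e : Equiv.Perm ℚ => e 0) h
  simpa [trQ_zpow, halfQ_zpow] using this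

theorem half_trQ (n m : ℤ) (h : halfQ ^ n = trQ ^ m) : n = 0 := by
  have h0 := trQ_half m n h.symm
  subst h0
  have := congrArg (fun e : Equiv.Perm ℚ => e 1) h
  simp only [halfQ_zpow, zpow_zero, Equiv.Perm.one_apply, one_mul] at this
  have h2 := (zpow_eq_one_iff_right₀ (by norm_num : (0 : ℚ) ≤ 2) (by norm_num)).1 this
  omega

theorem trQ_one (n : ℤ) (h : trQ ^ n = 1) : n = 0 := trQ_half n 0 (by simpa using h)
theorem half_one (n : ℤ) (h : halfQ ^ n = 1) : n = 0 := half_trQ n 0 (by simpa using h)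

/-- The collapsing gadget: an embedding making `w` control everything. -/
theorem gadget {G I : Type} [Group G] (w : G) (e : I → G) (hw : ∀ n : ℤ, w ^ n = 1 → n = 0)
    (he : ∀ i (n m : ℤ), e i ^ n = w ^ m → n = 0) :
    ∃ (P : Type) (_ : Group P) (j : G →* P) (z : P) (y : I → P), Function.Injective j ∧
      (j w)⁻¹ * z * j w = z ^ 2 ∧ (∀ i, z⁻¹ * y i * z = y i ^ 2) ∧
      (∀ i, (y i)⁻¹ * j (e i) * y i = j (e i) ^ 2) := by
  obtain ⟨P1, _, i1, i2, hi1, hc, hfree⟩ := amalgam_free w halfQ hw half_one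
  obtain ⟨Q, _, k1, k2, -, hk, hfreeQ⟩ := amalgam_free trQ halfQ trQ_one half_one
  -- in `Q` the chain is `halfQ` (first copy), `trQ = halfQ`, `trQ` (second copy)
  have hQ := hfreeQ halfQ trQ half_trQ trQ_half
  let N : Type := P1 × Q × ℕ
  have hN : Infinite N := inferInstanceAs (Infinite (P1 × Q × ℕ))
  have hP1N : Cardinal.mk P1 ≤ Cardinal.mk N :=
    Cardinal.mk_le_of_injective (f := fun p => ((p, 1, 0) : P1 × Q × ℕ)) (by
      intro a b h; exact congrArg (fun x : P1 × Q × ℕ => x.1) h)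
  have hQN : Cardinal.mk Q ≤ Cardinal.mk N :=
    Cardinal.mk_le_of_injective (f := fun p => ((1, p, 0) : P1 × Q × ℕ)) (by
      intro a b h; exact congrArg (fun x : P1 × Q × ℕ => x.2.1) h)
  have hP : ∀ i, Function.Injective (liftTwo (i2 trQ) (i1 (e i))) := by
    intro i
    have h1 := hfree (e i) trQ (he i) trQ_half
    let sw : FTwo →* FTwo := liftTwo genB genA
    have hsw : sw.comp sw = MonoidHom.id _ := by
      apply Monoid.CoprodI.ext_hom
      intro i
      apply MonoidHom.ext_mint
      cases i
      · exact ((congrArg sw (liftTwo_genB genB genA)).trans (liftTwo_genA genB genA))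
      · exact ((congrArg sw (liftTwo_genA genB genA)).trans (liftTwo_genB genB genA))
    have hswi : Function.Injective sw := by
      intro a b h
      have := congrArg sw h
      simpa [← MonoidHom.comp_apply, hsw] using this
    have : liftTwo (i2 trQ) (i1 (e i)) = (liftTwo (i1 (e i)) (i2 trQ)).comp sw := by
      apply Monoid.CoprodI.ext_hom
      intro i'
      apply MonoidHom.ext_mint
      cases i'
      · show liftTwo (i2 trQ) (i1 (e i)) genB = liftTwo (i1 (e i)) (i2 trQ) (sw genB)
        rw [liftTwo_genB, show sw genB = genA from liftTwo_genB _ _, liftTwo_genA]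
      · show liftTwo (i2 trQ) (i1 (e i)) genA = liftTwo (i1 (e i)) (i2 trQ) (sw genA)
        rw [liftTwo_genA, show sw genA = genB from liftTwo_genA _ _, liftTwo_genB]
    rw [this]
    exact h1.comp hswi
  have hex := fun i => extend_action (N := N) _ _ (hP i) hQ hP1N hQN
  choose ψ hψ using hex
  let L : P1 →* Equiv.Perm (P1 × N) :=
    { toFun := fun x => Equiv.prodCongr (Equiv.mulLeft x) (Equiv.refl N)
      map_one' := by ext <;> simp
      map_mul' := by intro x y; ext <;> simp [mul_assoc] }
  have hLi : Function.Injective L := by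
    intro a b h
    have := congrArg (fun e : Equiv.Perm (P1 × N) => (e (1, (1, 1, 0))).1) h
    simpa [L] using this
  have hz : ∀ i, L (i2 trQ) = ψ i (k1 halfQ) := by
    intro i
    have := hψ i genA
    rw [liftTwo_genA, liftTwo_genA] at this
    ext1 ⟨g, n⟩
    rw [this]; rfl
  have hee : ∀ i, L (i1 (e i)) = ψ i (k2 trQ) := by
    intro i
    have := hψ i genB
    rw [liftTwo_genB, liftTwo_genB] at this
    ext1 ⟨g, n⟩
    rw [this]; rfl
  refine ⟨Equiv.Perm (P1 × N), inferInstance, L.comp i1, L (i2 trQ), fun i => ψ i (k1 trQ),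
    hLi.comp hi1, ?_, ?_, ?_⟩
  · rw [MonoidHom.comp_apply, hc, ← map_inv, ← map_inv, ← map_mul, ← map_mul, ← map_mul, ← map_mul,
      bs_rel, map_pow, map_pow]
  · intro i
    rw [hz i, ← map_inv, ← map_inv, ← map_mul, ← map_mul, ← map_mul, ← map_mul,
      bs_rel, map_pow, map_pow]
  · intro i
    rw [MonoidHom.comp_apply, hee i, hk, ← map_inv, ← map_inv, ← map_mul, ← map_mul, ← map_mul,
      ← map_mul, bs_rel, map_pow, map_pow]
theorem pattern_split {A Ξ M : Type} [AddCommGroup A] [Infinite M]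
    (hM : Cardinal.mk (A × Ξ) ≤ Cardinal.mk M) (β : A →+ A) (hβ : Function.Injective β)
    (col : Ξ → A → Bool) (hcol : ∀ f : A → Bool, ∃ κ, ∀ u, col κ (β u) = f u)
    (κ0 : Ξ) (m0 : M) :
    ∃ e : A × Ξ × M ≃ A × ((A → Bool) × M),
      (∀ u a κ m, e (β u + a, κ, m) = (u + (e (a, κ, m)).1, (e (a, κ, m)).2)) ∧
      (∀ a κ m, (e (a, κ, m)).2.1 (e (a, κ, m)).1 = col κ a) ∧
      e (0, κ0, m0) = (0, fun u => col κ0 (β u), m0) := by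
  classical
  obtain ⟨T, hT, h0⟩ := AddSubgroup.exists_isComplement_right β.range 0
  let O := T × Ξ × M
  let π : O → (A → Bool) := fun o u => col o.2.1 (β u + o.1)
  have hfib : ∀ f, Cardinal.mk {o : O // π o = f} = Cardinal.mk M := by
    intro f
    apply le_antisymm
    · refine (Cardinal.mk_subtype_le _).trans ?_
      have e1 : Cardinal.mk O = Cardinal.mk ((T × Ξ) × M) :=
        Cardinal.mk_congr (Equiv.prodAssoc T Ξ M).symm
      rw [e1, Cardinal.mk_prod, Cardinal.lift_id, Cardinal.lift_id]
      have e2 : Cardinal.mk (T × Ξ) ≤ Cardinal.mk M := by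
        refine le_trans (Cardinal.mk_le_of_injective (f := fun x => ((x.1 : A), x.2)) ?_) hM
        rintro ⟨a, x⟩ ⟨b, y⟩ h
        simp only [Prod.mk.injEq] at h
        rw [Subtype.ext h.1, h.2]
      exact (mul_le_mul_left e2 _).trans (Cardinal.mul_eq_self (Cardinal.aleph0_le_mk M)).le
    · obtain ⟨κ, hκ⟩ := hcol f
      refine Cardinal.mk_le_of_injective (f := fun m => ⟨(⟨0, h0⟩, κ, m), ?_⟩) ?_
      · funext u; simpa [π] using hκ u
      · intro m m' h
        exact congrArg (fun x : T × Ξ × M => x.2.2) (congrArg Subtype.val h)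
  have hfe : ∀ f, Nonempty ({o : O // π o = f} ≃ M) := fun f => Cardinal.eq.1 (hfib f)
  let F := fun f => Classical.choice (hfe f)
  let E0 : O ≃ (A → Bool) × M :=
    (Equiv.sigmaFiberEquiv π).symm.trans
      ((Equiv.sigmaCongrRight F).trans (Equiv.sigmaEquivProd _ _))
  have hE0 : ∀ o, (E0 o).1 = π o := fun o => rfl
  let o0 : O := (⟨0, h0⟩, κ0, m0)
  let sw : Equiv.Perm ((A → Bool) × M) := Equiv.swap (E0 o0) (π o0, m0)
  have hsw : ∀ x, (sw x).1 = x.1 := by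
    intro x
    simp only [sw, Equiv.swap_apply_def]
    split_ifs with h1 h2
    · rw [h1]; exact (hE0 o0).symm
    · rw [h2]; exact hE0 o0
    · rfl
  let E : O ≃ (A → Bool) × M := E0.trans sw
  have hE : ∀ o, (E o).1 = π o := fun o => (hsw _).trans (hE0 o)
  have hEo : E o0 = (π o0, m0) := Equiv.swap_apply_left _ _
  let D : A × O ≃ A × Ξ × M := Equiv.ofBijective (fun x => (β x.1 + x.2.1, x.2.2.1, x.2.2.2)) (by
    constructor
    · rintro ⟨a, t, κ, n⟩ ⟨a', t', κ', n'⟩ h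
      simp only [Prod.mk.injEq] at h
      obtain ⟨h, rfl, rfl⟩ := h
      have := @hT.1 (⟨β a, a, rfl⟩, t) (⟨β a', a', rfl⟩, t') h
      simp only [Prod.mk.injEq] at this
      rw [hβ (congrArg Subtype.val this.1), this.2]
    · rintro ⟨g, κ, n⟩
      obtain ⟨⟨⟨_, a, rfl⟩, t⟩, h⟩ := hT.2 g
      exact ⟨(a, t, κ, n), by simpa using h⟩)
  have hD : ∀ a o, D (a, o) = (β a + o.1, o.2.1, o.2.2) := fun a o => rfl
  let e : A × Ξ × M ≃ A × ((A → Bool) × M) := D.symm.trans (Equiv.prodCongr (Equiv.refl A) E)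
  have he : ∀ a o, e (D (a, o)) = (a, E o) := by
    intro a o
    simp [e]
  refine ⟨e, ?_, ?_, ?_⟩
  · intro u a κ m
    obtain ⟨⟨v, o⟩, h⟩ := D.surjective (a, κ, m)
    have h2 : D (u + v, o) = (β u + a, κ, m) := by
      rw [hD] at h ⊢
      simp only [Prod.mk.injEq] at h ⊢
      refine ⟨?_, h.2⟩
      rw [map_add, add_assoc, h.1]
    rw [← h2, ← h, he, he]
  · intro a κ m
    obtain ⟨⟨v, o⟩, h⟩ := D.surjective (a, κ, m)
    rw [← h, he]
    simp only [hE, π]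
    rw [hD] at h
    simp only [Prod.mk.injEq] at h
    rw [h.1, h.2.1]
  · have : ((0 : A), κ0, m0) = D (0, o0) := by rw [hD]; simp [o0]
    rw [this, he, hEo]
    simp [π, o0]

theorem exists_sigma {A Ξ M : Type} [AddCommGroup A] [Infinite M]
    (hM : Cardinal.mk (A × Ξ) ≤ Cardinal.mk M) (β γ : A →+ A) (hβ : Function.Injective β)
    (hγ : Function.Injective γ) (col col' : Ξ → A → Bool)
    (hcol : ∀ f : A → Bool, ∃ κ, ∀ u, col κ (β u) = f u)
    (hcol' : ∀ f : A → Bool, ∃ κ, ∀ u, col' κ (γ u) = f u)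
    (κ0 : Ξ) (m0 : M) (h0 : ∀ u, col κ0 (β u) = col' κ0 (γ u)) :
    ∃ σ : Equiv.Perm (A × Ξ × M),
      (∀ u y, σ (β u + y.1, y.2) = (γ u + (σ y).1, (σ y).2)) ∧
      (∀ y, col y.2.1 y.1 = col' (σ y).2.1 (σ y).1) ∧ σ (0, κ0, m0) = (0, κ0, m0) := by
  obtain ⟨e, h1, h2, h3⟩ := pattern_split hM β hβ col hcol κ0 m0
  obtain ⟨e', h1', h2', h3'⟩ := pattern_split hM γ hγ col' hcol' κ0 m0
  refine ⟨e.trans e'.symm, ?_, ?_, ?_⟩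
  · rintro u ⟨a, κ, m⟩
    obtain ⟨⟨a', κ', m'⟩, h⟩ := e'.surjective (e (a, κ, m))
    simp only [Equiv.trans_apply, h1]
    rw [← h, Equiv.symm_apply_apply, Equiv.symm_apply_eq, h1']
  · rintro ⟨a, κ, m⟩
    obtain ⟨⟨a', κ', m'⟩, h⟩ := e'.surjective (e (a, κ, m))
    simp only [Equiv.trans_apply]
    rw [← h, Equiv.symm_apply_apply]
    simp only
    rw [← h2, ← h2', h]
  · simp only [Equiv.trans_apply]
    rw [Equiv.symm_apply_eq, h3, h3']
    simp [h0]

/-- The permutation model of the machine group. -/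
theorem perm_model {A Q R : Type} [AddCommGroup A] (src tgt : R → Q) (b c : R → A)
    (β γ : R → A →+ A) (hβ : ∀ r, Function.Injective (β r)) (hγ : ∀ r, Function.Injective (γ r))
    (κ0 : Q → A → Bool)
    (inv : ∀ r u, κ0 (src r) (b r + β r u) = κ0 (tgt r) (c r + γ r u))
    (qh : Q) (h : A) (hh : κ0 qh h = false) :
    ∃ (G : Type) (_ : Group G) (X : Multiplicative A →* G) (t : Q → G) (s : R → G) (k : G)
      (deg : G →* Multiplicative ℤ),
      (∀ r u, s r * X (Multiplicative.ofAdd (β r u)) = X (Multiplicative.ofAdd (γ r u)) * s r) ∧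
      (∀ r, s r * ((X (Multiplicative.ofAdd (b r)))⁻¹ * t (src r) * X (Multiplicative.ofAdd (b r)))
        = ((X (Multiplicative.ofAdd (c r)))⁻¹ * t (tgt r) * X (Multiplicative.ofAdd (c r))) * s r) ∧
      (∀ r, k * s r = s r * k) ∧
      (k * ((X (Multiplicative.ofAdd h))⁻¹ * t qh * X (Multiplicative.ofAdd h)) =
        ((X (Multiplicative.ofAdd h))⁻¹ * t qh * X (Multiplicative.ofAdd h)) * k) ∧
      (∀ a, deg (X a) = 1) ∧ (∀ q, deg (t q) = Multiplicative.ofAdd 1) ∧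
      (∀ r, deg (s r) = Multiplicative.ofAdd 1) ∧ (deg k = Multiplicative.ofAdd 1) ∧
      (∀ q a, κ0 q a = true → ∀ n : ℤ,
        (k * ((X (Multiplicative.ofAdd a))⁻¹ * t q * X (Multiplicative.ofAdd a)) * k⁻¹ *
          ((X (Multiplicative.ofAdd a))⁻¹ * t q * X (Multiplicative.ofAdd a))⁻¹) ^ n = 1 → n = 0) := by
  classical
  let Ξ := Q → A → Bool
  let M := (A × Ξ) × ℕ
  have hMi : Infinite M := inferInstanceAs (Infinite ((A × (Q → A → Bool)) × ℕ))
  have hM : Cardinal.mk (A × Ξ) ≤ Cardinal.mk M :=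
    Cardinal.mk_le_of_injective (f := fun x => ((x, 0) : (A × Ξ) × ℕ)) (by
      intro x y h; exact congrArg (fun x : (A × Ξ) × ℕ => x.1) h)
  let m0 : M := ((0, κ0), 0)
  have hsur : ∀ (q : Q) (b : A) (β : A →+ A), Function.Injective β →
      ∀ f : A → Bool, ∃ κ : Ξ, ∀ u, κ q (b + β u) = f u := by
    intro q b β hβ f
    refine ⟨fun _ a => Function.extend (fun u => b + β u) f (fun _ => false) a, fun u => ?_⟩
    have hi : Function.Injective (fun u => b + β u) := fun x y hxy => hβ (add_left_cancel hxy)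
    exact hi.extend_apply _ _ _
  have hσ := fun r => exists_sigma hM (β r) (γ r) (hβ r) (hγ r)
    (fun (κ : Ξ) a => κ (src r) (b r + a)) (fun (κ : Ξ) a => κ (tgt r) (c r + a))
    (hsur _ _ _ (hβ r)) (hsur _ _ _ (hγ r)) κ0 m0 (inv r)
  choose σ hσ1 hσ2 hσ3 using hσ
  let Y := A × Ξ × M
  let Ω := (Y × Bool) × ℤ
  let p : Y := (0, κ0, m0)
  let X : Multiplicative A →* Equiv.Perm Ω :=
    { toFun := fun a =>
        { toFun := fun x => (((Multiplicative.toAdd a + x.1.1.1, x.1.1.2), x.1.2), x.2)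
          invFun := fun x => (((-Multiplicative.toAdd a + x.1.1.1, x.1.1.2), x.1.2), x.2)
          left_inv := by rintro ⟨⟨⟨a, κ, m⟩, ε⟩, n⟩; simp
          right_inv := by rintro ⟨⟨⟨a, κ, m⟩, ε⟩, n⟩; simp }
      map_one' := by ext1 ⟨⟨⟨a, κ, m⟩, ε⟩, n⟩; simp
      map_mul' := by intro x y; ext1 ⟨⟨⟨a, κ, m⟩, ε⟩, n⟩; simp [add_assoc] }
  let t : Q → Equiv.Perm Ω := fun q =>
    { toFun := fun x => ((x.1.1, xor x.1.2 (x.1.1.2.1 q x.1.1.1)), x.2)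
      invFun := fun x => ((x.1.1, xor x.1.2 (x.1.1.2.1 q x.1.1.1)), x.2)
      left_inv := by rintro ⟨⟨⟨a, κ, m⟩, ε⟩, n⟩; simp
      right_inv := by rintro ⟨⟨⟨a, κ, m⟩, ε⟩, n⟩; simp }
  let s : R → Equiv.Perm Ω := fun r =>
    Equiv.prodCongr (Equiv.prodCongr (σ r) (Equiv.refl Bool)) (Equiv.refl ℤ)
  let k : Equiv.Perm Ω :=
    { toFun := fun x => (x.1, if x.1 = (p, false) then x.2 + 1 else x.2)
      invFun := fun x => (x.1, if x.1 = (p, false) then x.2 - 1 else x.2)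
      left_inv := by rintro ⟨x, n⟩; by_cases hx : x = (p, false) <;> simp [hx]
      right_inv := by rintro ⟨x, n⟩; by_cases hx : x = (p, false) <;> simp [hx] }
  have hXt : ∀ a q y ε n, ((X (Multiplicative.ofAdd a))⁻¹ * t q * X (Multiplicative.ofAdd a))
      ((y, ε), n) = ((y, xor ε (y.2.1 q (a + y.1))), n) := by
    rintro a q ⟨v, κ, m⟩ ε n
    show (((-a + (a + v), κ, m), xor ε (κ q (a + v))), n) = _
    simp
  have hXti : ∀ a q y ε n, ((X (Multiplicative.ofAdd a))⁻¹ * t q * X (Multiplicative.ofAdd a))⁻¹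
      ((y, ε), n) = ((y, xor ε (y.2.1 q (a + y.1))), n) := by
    intro a q y ε n
    rw [Equiv.Perm.inv_eq_iff_eq, hXt]
    simp
  have hs : ∀ r y ε n, s r ((y, ε), n) = ((σ r y, ε), n) := fun _ _ _ _ => rfl
  have hk : ∀ y ε n, k ((y, ε), n) = ((y, ε), if (y, ε) = (p, false) then n + 1 else n) :=
    fun _ _ _ => rfl
  have hki : ∀ y ε n, k⁻¹ ((y, ε), n) = ((y, ε), if (y, ε) = (p, false) then n - 1 else n) :=
    fun _ _ _ => rfl
  have hX : ∀ a y ε n, X (Multiplicative.ofAdd a) ((y, ε), n) = (((a + y.1, y.2), ε), n) :=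
    fun _ _ _ _ => rfl
  have R1 : ∀ r u, s r * X (Multiplicative.ofAdd (β r u)) =
      X (Multiplicative.ofAdd (γ r u)) * s r := by
    intro r u
    ext1 ⟨⟨y, ε⟩, n⟩
    rw [Equiv.Perm.mul_apply, Equiv.Perm.mul_apply, hX, hs, hs, hX, hσ1]
  have R2 : ∀ r, s r * ((X (Multiplicative.ofAdd (b r)))⁻¹ * t (src r) *
      X (Multiplicative.ofAdd (b r))) = ((X (Multiplicative.ofAdd (c r)))⁻¹ * t (tgt r) *
      X (Multiplicative.ofAdd (c r))) * s r := by
    intro r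
    ext1 ⟨⟨y, ε⟩, n⟩
    have e1 := hXt (b r) (src r) y ε n
    have e2 := hXt (c r) (tgt r) (σ r y) ε n
    generalize (X (Multiplicative.ofAdd (b r)))⁻¹ * t (src r) *
      X (Multiplicative.ofAdd (b r)) = T1 at *
    generalize (X (Multiplicative.ofAdd (c r)))⁻¹ * t (tgt r) *
      X (Multiplicative.ofAdd (c r)) = T2 at *
    rw [Equiv.Perm.mul_apply, Equiv.Perm.mul_apply, e1, hs, hs, e2]
    have := hσ2 r y
    rw [this]
  have R3 : ∀ r, k * s r = s r * k := by
    intro r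
    ext1 ⟨⟨y, ε⟩, n⟩
    rw [Equiv.Perm.mul_apply, Equiv.Perm.mul_apply, hk, hs, hs, hk]
    have : (σ r y, ε) = (p, false) ↔ (y, ε) = (p, false) := by
      have hp : σ r p = p := hσ3 r
      simp only [Prod.mk.injEq]
      refine and_congr_left fun _ => ⟨fun h => (σ r).injective (h.trans hp.symm), ?_⟩
      rintro rfl
      exact hp
    simp only [this]
  have R4 : k * ((X (Multiplicative.ofAdd h))⁻¹ * t qh * X (Multiplicative.ofAdd h)) =
        ((X (Multiplicative.ofAdd h))⁻¹ * t qh * X (Multiplicative.ofAdd h)) * k := by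
    ext1 ⟨⟨y, ε⟩, n⟩
    have e1 := hXt h qh
    generalize (X (Multiplicative.ofAdd h))⁻¹ * t qh * X (Multiplicative.ofAdd h) = T at *
    rw [Equiv.Perm.mul_apply, Equiv.Perm.mul_apply, hk, e1, e1, hk]
    by_cases hy : y = p
    · subst hy
      have : p.2.1 qh (h + p.1) = false := by simpa [p] using hh
      simp [this]
    · simp [hy]
  have R5 : ∀ q a, κ0 q a = true → ∀ n : ℤ,
      ((k * ((X (Multiplicative.ofAdd a))⁻¹ * t q * X (Multiplicative.ofAdd a)) * k⁻¹ *
          ((X (Multiplicative.ofAdd a))⁻¹ * t q * X (Multiplicative.ofAdd a))⁻¹) ^ n) ((p, false), 0) =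
        ((p, false), n) := by
    intro q a hqa
    have hpa : p.2.1 q (a + p.1) = true := by simpa [p] using hqa
    have one : ∀ n, (k * ((X (Multiplicative.ofAdd a))⁻¹ * t q * X (Multiplicative.ofAdd a)) * k⁻¹ *
          ((X (Multiplicative.ofAdd a))⁻¹ * t q * X (Multiplicative.ofAdd a))⁻¹)
        ((p, false), n) = ((p, false), n + 1) := by
      intro n
      have e1 := hXt a q
      have e2 := hXti a q
      generalize (X (Multiplicative.ofAdd a))⁻¹ * t q * X (Multiplicative.ofAdd a) = T at *
      rw [Equiv.Perm.mul_apply, Equiv.Perm.mul_apply, Equiv.Perm.mul_apply,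
        e2, hpa, hki, e1, hpa, hk]
      simp
    intro n
    induction n using Int.induction_on with
    | zero => rfl
    | succ n ih => rw [add_comm, zpow_add, Equiv.Perm.mul_apply, ih, zpow_one, one, add_comm]
    | pred n ih =>
      rw [sub_eq_neg_add, zpow_add, Equiv.Perm.mul_apply, ih, zpow_neg_one,
        Equiv.Perm.inv_eq_iff_eq, one]
      simp
  have d1 : ∀ a b : Multiplicative ℤ, a * b = b * a := mul_comm
  refine ⟨Equiv.Perm Ω × Multiplicative ℤ, inferInstance, X.prod 1,
    fun q => (t q, Multiplicative.ofAdd 1), fun r => (s r, Multiplicative.ofAdd 1),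
    (k, Multiplicative.ofAdd 1), MonoidHom.snd _ _, ?_, ?_, ?_, ?_, ?_, ?_, ?_, ?_, ?_⟩
  · intro r u
    exact Prod.ext (R1 r u) (d1 _ _)
  · intro r
    refine Prod.ext (R2 r) ?_
    simp
  · intro r
    exact Prod.ext (R3 r) (d1 _ _)
  · exact Prod.ext R4 (d1 _ _)
  · intro a; rfl
  · intro a; rfl
  · intro a; rfl
  · rfl
  · intro q a hqa n hn
    have h1 := congrArg Prod.fst hn
    have h2 := R5 q a hqa n
    have h3 : (k * ((X (Multiplicative.ofAdd a))⁻¹ * t q * X (Multiplicative.ofAdd a)) * k⁻¹ *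
          ((X (Multiplicative.ofAdd a))⁻¹ * t q * X (Multiplicative.ofAdd a))⁻¹) ^ n = 1 := h1
    rw [h3] at h2
    exact (congrArg Prod.snd h2).symm
/-! ### Counter machines in base 5 and their groups -/

/-- A machine with integer registers, reading a base-5 digit of a register at a time. -/
structure Mach (Q ι : Type) where
  key : Q → ι
  tgt : Q → Fin 5 → Q
  p : Q → Fin 5 → ℕ
  c : Q → Fin 5 → ℕ
  q0 : Q
  qh : Q
  main : ι
  hm : ℕ
  p_pos : ∀ q d, 0 < p q d
  tgt_qh : ∀ d, tgt qh d = qh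
  p_qh : ∀ d, p qh d = 5
  c_qh : ∀ d : Fin 5, c qh d = (d : ℕ)

abbrev OG (Q ι : Type) := ι ⊕ Q ⊕ (Q × Fin 5) ⊕ Unit

abbrev Gen (Q ι : Type) := OG Q ι ⊕ OG Q ι ⊕ Unit ⊕ Unit

abbrev RelIx (Q ι : Type) :=
  (ι × ι) ⊕ ((Q × Fin 5) × ι) ⊕ (Q × Fin 5) ⊕ (Q × Fin 5) ⊕ Unit ⊕ Unit ⊕ OG Q ι ⊕ OG Q ι

namespace Mach

variable {Q ι : Type} [DecidableEq ι] (M : Mach Q ι)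

def dgt (n : ℤ) : Fin 5 := ⟨(n % 5).toNat, by omega⟩

theorem dgt_eq (u : ℤ) (d : Fin 5) : dgt (5 * u + d) = d := by
  apply Fin.ext
  have := d.2
  simp only [dgt]
  omega

def step (C : Q × (ι → ℤ)) : Q × (ι → ℤ) :=
  (M.tgt C.1 (dgt (C.2 (M.key C.1))),
    Function.update C.2 (M.key C.1)
      (M.p C.1 (dgt (C.2 (M.key C.1))) * (C.2 (M.key C.1) / 5) +
        M.c C.1 (dgt (C.2 (M.key C.1)))))

theorem step_eq (q : Q) (a : ι → ℤ) (u : ℤ) (d : Fin 5) (h : a (M.key q) = 5 * u + d) :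
    M.step (q, a) = (M.tgt q d, Function.update a (M.key q) (M.p q d * u + M.c q d)) := by
  have h2 : (5 * u + (d : ℕ) : ℤ) / 5 = u := by have := d.2; omega
  simp only [step, h, dgt_eq, h2]

theorem step_qh (a : ι → ℤ) : M.step (M.qh, a) = (M.qh, a) := by
  have h : a (M.key M.qh) = 5 * (a (M.key M.qh) / 5) + (dgt (a (M.key M.qh)) : ℕ) := by
    simp only [dgt]; omega
  rw [M.step_eq _ _ _ _ h, M.tgt_qh, M.p_qh, M.c_qh]
  conv_rhs => rw [← Function.update_eq_self (M.key M.qh) a, h]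
  simp

/-- The configuration eventually reaches the halting configuration. -/
def Reach (C : Q × (ι → ℤ)) : Prop :=
  ∃ n : ℕ, M.step^[n] C = (M.qh, Pi.single M.main (M.hm : ℤ))

theorem reach_step (C : Q × (ι → ℤ)) : M.Reach (M.step C) ↔ M.Reach C := by
  constructor
  · rintro ⟨n, h⟩
    exact ⟨n + 1, h⟩
  · rintro ⟨n, h⟩
    refine ⟨n, ?_⟩
    rw [← Function.iterate_succ_apply, Function.iterate_succ_apply', h, step_qh]

def scale (k : ι) (m : ℤ) : (ι → ℤ) →+ (ι → ℤ) where
  toFun a j := if j = k then m * a j else a j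
  map_zero' := by funext j; simp
  map_add' a b := by funext j; by_cases h : j = k <;> simp [h, mul_add]

theorem scale_inj (k : ι) (m : ℤ) (hm : m ≠ 0) : Function.Injective (scale k m) := by
  intro a b h
  funext j
  have := congrFun h j
  by_cases hj : j = k
  · simpa [scale, hj, hm] using this
  · simpa [scale, hj] using this

theorem scale_single (k : ι) (m : ℤ) (j : ι) :
    scale k m (Pi.single j 1) = Pi.single j (if j = k then m else 1) := by
  funext i
  by_cases h : i = j
  · subst h
    by_cases hk : i = k <;> simp [scale, hk]
  · simp [scale, h]

theorem step_scale (q : Q) (d : Fin 5) (u : ι → ℤ) :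
    M.step (q, Pi.single (M.key q) ((d : ℕ) : ℤ) + scale (M.key q) 5 u) =
      (M.tgt q d, Pi.single (M.key q) (M.c q d : ℤ) + scale (M.key q) (M.p q d) u) := by
  rw [M.step_eq q _ (u (M.key q)) d (by simp [scale, add_comm])]
  congr 1
  funext j
  by_cases h : j = M.key q
  · subst h; simp [scale, add_comm]
  · simp [scale, h]

/-! generators -/
def gx (j : ι) : Gen Q ι := Sum.inl (Sum.inl j)
def gt (q : Q) : Gen Q ι := Sum.inl (Sum.inr (Sum.inl q))
def gs (r : Q × Fin 5) : Gen Q ι := Sum.inl (Sum.inr (Sum.inr (Sum.inl r)))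
def gk : Gen Q ι := Sum.inl (Sum.inr (Sum.inr (Sum.inr ())))
def gy (a : OG Q ι) : Gen Q ι := Sum.inr (Sum.inl a)
def gom : Gen Q ι := Sum.inr (Sum.inr (Sum.inl ()))
def gz : Gen Q ι := Sum.inr (Sum.inr (Sum.inr ()))

/-- The key commutator. -/
def wv {G : Type} [Group G] (v : Gen Q ι → G) : G :=
  v gk * ((v gom)⁻¹ * v (gt M.q0) * v gom) * (v gk)⁻¹ * ((v gom)⁻¹ * v (gt M.q0) * v gom)⁻¹

/-- The words to be killed. -/
def ev {G : Type} [Group G] (v : Gen Q ι → G) : OG Q ι → G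
  | Sum.inl j => v (gx j) * v (gt M.q0)
  | Sum.inr a => v (Sum.inl (Sum.inr a))

def lr {G : Type} [Group G] (v : Gen Q ι → G) : RelIx Q ι → G × G
  | Sum.inl (i, j) => (v (gx i) * v (gx j), v (gx j) * v (gx i))
  | Sum.inr (Sum.inl (r, j)) =>
      (v (gs r) * v (gx j) ^ (if j = M.key r.1 then 5 else 1),
        v (gx j) ^ (if j = M.key r.1 then M.p r.1 r.2 else 1) * v (gs r))
  | Sum.inr (Sum.inr (Sum.inl r)) =>
      (v (gs r) * ((v (gx (M.key r.1)) ^ (r.2 : ℕ))⁻¹ * v (gt r.1) * v (gx (M.key r.1)) ^ (r.2 : ℕ)),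
        ((v (gx (M.key r.1)) ^ (M.c r.1 r.2))⁻¹ * v (gt (M.tgt r.1 r.2)) *
          v (gx (M.key r.1)) ^ (M.c r.1 r.2)) * v (gs r))
  | Sum.inr (Sum.inr (Sum.inr (Sum.inl r))) => (v gk * v (gs r), v (gs r) * v gk)
  | Sum.inr (Sum.inr (Sum.inr (Sum.inr (Sum.inl _)))) =>
      (v gk * ((v (gx M.main) ^ M.hm)⁻¹ * v (gt M.qh) * v (gx M.main) ^ M.hm),
        ((v (gx M.main) ^ M.hm)⁻¹ * v (gt M.qh) * v (gx M.main) ^ M.hm) * v gk)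
  | Sum.inr (Sum.inr (Sum.inr (Sum.inr (Sum.inr (Sum.inl _))))) =>
      ((M.wv v)⁻¹ * v gz * M.wv v, v gz ^ 2)
  | Sum.inr (Sum.inr (Sum.inr (Sum.inr (Sum.inr (Sum.inr (Sum.inl a)))))) =>
      ((v gz)⁻¹ * v (gy a) * v gz, v (gy a) ^ 2)
  | Sum.inr (Sum.inr (Sum.inr (Sum.inr (Sum.inr (Sum.inr (Sum.inr a)))))) =>
      ((v (gy a))⁻¹ * M.ev v a * v (gy a), M.ev v a ^ 2)

/-- All relations not depending on the input hold. -/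
def Sat {G : Type} [Group G] (v : Gen Q ι → G) : Prop := ∀ i, (M.lr v i).1 = (M.lr v i).2

/-- the relators -/
def relator (i : RelIx Q ι) : FreeGroup (Gen Q ι) :=
  (M.lr FreeGroup.of i).1 * (M.lr FreeGroup.of i).2⁻¹

theorem lift_lr {G H : Type} [Group G] [Group H] (f : G →* H) (v : Gen Q ι → G) (i : RelIx Q ι) :
    (f (M.lr v i).1, f (M.lr v i).2) = M.lr (fun g => f (v g)) i := by
  rcases i with i | i | i | i | i | i | i | (i | i) <;>
    simp only [lr, wv, ev, map_mul, map_inv, map_pow]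

theorem sat_map {G H : Type} [Group G] [Group H] (f : G →* H) (v : Gen Q ι → G) (h : M.Sat v) :
    M.Sat (fun g => f (v g)) := by
  intro i
  rw [← M.lift_lr f v i, h i]

theorem sat_iff {H : Type} [Group H] (v : Gen Q ι → H) :
    M.Sat v ↔ ∀ i, FreeGroup.lift v (M.relator i) = 1 := by
  refine forall_congr' fun i => ?_
  have h1 := M.lift_lr (FreeGroup.lift v) FreeGroup.of i
  simp only [FreeGroup.lift_apply_of] at h1
  rw [← h1, relator, map_mul, map_inv, mul_inv_eq_one]

theorem sat_one {H : Type} [Group H] : M.Sat (fun _ : Gen Q ι => (1 : H)) := by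
  intro i
  rcases i with i | i | i | i | i | i | i | (i | i) <;> simp [lr, wv, ev]

theorem collapse [Fintype ι] {G : Type} [Group G] (v : Gen Q ι → G) (h : M.Sat v) (N : ℕ)
    (hN : v gom = v (gx M.main) ^ N) (hr : M.Reach (M.q0, Pi.single M.main (N : ℤ))) :
    ∀ g, v g = 1 := by
  have c1 : ∀ i j, Commute (v (gx i)) (v (gx j)) := fun i j => h (Sum.inl (i, j))
  have hcm : Pairwise fun i j => ∀ x y : Multiplicative ℤ,
      Commute (zpowersHom G (v (gx i)) x) (zpowersHom G (v (gx j)) y) := by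
    intro i j _ x y
    rw [zpowersHom_apply, zpowersHom_apply]
    exact (c1 i j).zpow_zpow _ _
  let X0 : (ι → Multiplicative ℤ) →* G :=
    MonoidHom.noncommPiCoprod (fun j => zpowersHom G (v (gx j))) hcm
  let X : (ι → ℤ) → G := fun a => X0 (fun j => Multiplicative.ofAdd (a j))
  have Xadd : ∀ a b, X (a + b) = X a * X b := fun a b => by
    simp only [X]; rw [← map_mul]; rfl
  have Xsingle : ∀ j (n : ℤ), X (Pi.single j n) = v (gx j) ^ n := by
    intro j n
    have : (fun i => Multiplicative.ofAdd (Pi.single (M := fun _ => ℤ) j n i)) =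
        Pi.mulSingle j (Multiplicative.ofAdd n) := by
      funext i
      by_cases hi : i = j
      · subst hi; simp
      · simp [hi]
    simp only [X, this, X0]
    rw [MonoidHom.noncommPiCoprod_mulSingle]
    simp
  have Xcomm : ∀ (s : G) a, (∀ j, Commute s (v (gx j) ^ (a j))) → Commute s (X a) := by
    intro s a hs
    exact Finset.noncommProd_commute _ _ (fun i _ j _ hij => hcm hij _ _) _ (fun j _ => by simpa using hs j)
  let T : Q × (ι → ℤ) → G := fun C => (X C.2)⁻¹ * v (gt C.1) * X C.2
  have hstep : ∀ C, Commute (v gk) (T (M.step C)) → Commute (v gk) (T C) := by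
    rintro ⟨q, a⟩ hc
    let d := dgt (a (M.key q))
    let u := a (M.key q) / 5
    have hd : a (M.key q) = 5 * u + (d : ℕ) := by simp only [d, u, dgt]; omega
    have hs := M.step_eq q a u d hd
    let b := Function.update a (M.key q) 0
    have ha : a = Pi.single (M.key q) ((d : ℕ) : ℤ) + Pi.single (M.key q) (5 * u) + b := by
      funext j
      by_cases hj : j = M.key q
      · subst hj; simp [b, hd, add_comm]
      · simp [b, hj]
    have ha' : Function.update a (M.key q) (M.p q d * u + M.c q d) =
        Pi.single (M.key q) (M.c q d : ℤ) + Pi.single (M.key q) (M.p q d * u) + b := by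
      funext j
      by_cases hj : j = M.key q
      · subst hj; simp [b, add_comm]
      · simp [b, hj]
    set σ := v (gs (q, d)) with hσ
    set x := v (gx (M.key q)) with hx
    have e2 : σ * x ^ (5 : ℤ) = x ^ (M.p q d : ℤ) * σ := by
      have := h (Sum.inr (Sum.inl ((q, d), M.key q)))
      simp only [lr, if_true] at this
      exact_mod_cast this
    have e2' : σ * x ^ (5 * u) = x ^ (M.p q d * u) * σ := by
      have e : SemiconjBy σ (x ^ (5 : ℤ)) (x ^ (M.p q d : ℤ)) := e2
      have := e.zpow_right u
      rw [← zpow_mul, ← zpow_mul] at this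
      exact this
    have e3 : σ * ((x ^ (d : ℕ))⁻¹ * v (gt q) * x ^ (d : ℕ)) =
      ((x ^ (M.c q d))⁻¹ * v (gt (M.tgt q d)) * x ^ (M.c q d)) * σ :=
      h (Sum.inr (Sum.inr (Sum.inl (q, d))))
    have eb : σ * X b = X b * σ := by
      apply Xcomm
      intro j
      by_cases hj : j = M.key q
      · subst hj; simp [b]
      · have := h (Sum.inr (Sum.inl ((q, d), j)))
        simp only [lr, hj, if_false, pow_one] at this
        exact Commute.zpow_right this _
    have ek : Commute (v gk) σ := h (Sum.inr (Sum.inr (Sum.inr (Sum.inl (q, d)))))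
    have main : SemiconjBy σ (T (q, a)) (T (M.step (q, a))) := by
      rw [hs, ha']
      nth_rewrite 1 [ha]
      simp only [T, Xadd, Xsingle]
      simp only [← hx]
      have k1 : SemiconjBy σ (x ^ (5 * u)) (x ^ (M.p q d * u)) := e2'
      have k2 : SemiconjBy σ (X b) (X b) := eb
      have k3 : SemiconjBy σ ((x ^ (d : ℕ))⁻¹ * v (gt q) * x ^ (d : ℕ))
        ((x ^ (M.c q d))⁻¹ * v (gt (M.tgt q d)) * x ^ (M.c q d)) := e3
      have := ((k1.mul_right k2).inv_right.mul_right k3).mul_right (k1.mul_right k2)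
      simpa [mul_assoc] using this
    have : T (q, a) = σ⁻¹ * T (M.step (q, a)) * σ := by
      rw [mul_assoc, ← main.eq]; group
    rw [this]
    exact (ek.inv_right.mul_right hc).mul_right ek
  have hT0 : Commute (v gk) (T (M.qh, Pi.single M.main (M.hm : ℤ))) := by
    have := h (Sum.inr (Sum.inr (Sum.inr (Sum.inr (Sum.inl ())))))
    simp only [lr] at this
    simp only [T, Xsingle, zpow_natCast]
    exact this
  have hT : ∀ n C, M.step^[n] C = (M.qh, Pi.single M.main (M.hm : ℤ)) →
      Commute (v gk) (T C) := by
    intro n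
    induction n with
    | zero => rintro C rfl; exact hT0
    | succ n ih => intro C hC; exact hstep C (ih _ hC)
  obtain ⟨n, hn⟩ := hr
  have hT1 := hT n _ hn
  have w1 : M.wv v = 1 := by
    simp only [T, Xsingle, zpow_natCast] at hT1
    rw [wv, hN, hT1.eq]
    group
  have sq : ∀ {a : G}, a = a ^ 2 → a = 1 := by
    intro a ha
    rw [pow_two] at ha
    exact (mul_eq_left.1 ha.symm)
  have z1 : v gz = 1 := by
    have := h (Sum.inr (Sum.inr (Sum.inr (Sum.inr (Sum.inr (Sum.inl ()))))))
    simp only [lr, w1] at this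
    exact sq (by simpa using this)
  have y1 : ∀ a, v (gy a) = 1 := by
    intro a
    have := h (Sum.inr (Sum.inr (Sum.inr (Sum.inr (Sum.inr (Sum.inr (Sum.inl a)))))))
    simp only [lr, z1] at this
    exact sq (by simpa using this)
  have e1 : ∀ a, M.ev v a = 1 := by
    intro a
    have := h (Sum.inr (Sum.inr (Sum.inr (Sum.inr (Sum.inr (Sum.inr (Sum.inr a)))))))
    simp only [lr, y1] at this
    exact sq (by simpa using this)
  have o1 : ∀ a, v (Sum.inl (Sum.inr a)) = 1 := fun a => e1 (Sum.inr a)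
  have x1 : ∀ j, v (gx j) = 1 := by
    intro j
    have h1 := e1 (Sum.inl j)
    have h2 : v (gt M.q0) = 1 := o1 _
    simpa [ev, h2] using h1
  rintro ((j | a) | a | a | a)
  · exact x1 j
  · exact o1 a
  · exact y1 a
  · show v gom = 1
    rw [hN, x1, one_pow]
  · exact z1

theorem model (N : ℕ) (hr : ¬ M.Reach (M.q0, Pi.single M.main (N : ℤ))) :
    ∃ (P : Type) (_ : Group P) (v : Gen Q ι → P), M.Sat v ∧ v gom = v (gx M.main) ^ N ∧
      ∃ g, v g ≠ 1 := by
  classical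
  obtain ⟨G, _, X, t, s, k, deg, h1, h2, h3, h4, dX, dt, ds, dk, h5⟩ :=
    perm_model (A := ι → ℤ) (Q := Q) (R := Q × Fin 5) (fun r => r.1) (fun r => M.tgt r.1 r.2)
      (fun r => Pi.single (M.key r.1) ((r.2 : ℕ) : ℤ)) (fun r => Pi.single (M.key r.1) (M.c r.1 r.2 : ℤ))
      (fun r => scale (M.key r.1) 5) (fun r => scale (M.key r.1) (M.p r.1 r.2))
      (fun r => scale_inj _ _ (by norm_num))
      (fun r => scale_inj _ _ (by have := M.p_pos r.1 r.2; positivity))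
      (fun q a => decide (¬ M.Reach (q, a)))
      (fun r u => by
        have e := M.reach_step (r.1, Pi.single (M.key r.1) ((r.2 : ℕ) : ℤ) + scale (M.key r.1) 5 u)
        rw [M.step_scale] at e
        exact decide_eq_decide.2 (not_congr e.symm))
      M.qh (Pi.single M.main (M.hm : ℤ)) (by simpa using ⟨0, rfl⟩)
  have hw := h5 M.q0 (Pi.single M.main (N : ℤ)) (by simpa using hr)
  let T := (X (Multiplicative.ofAdd (Pi.single M.main (N : ℤ))))⁻¹ * t M.q0 *
    X (Multiplicative.ofAdd (Pi.single M.main (N : ℤ)))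
  let w := k * T * k⁻¹ * T⁻¹
  let x : ι → G := fun j => X (Multiplicative.ofAdd (Pi.single j 1))
  let o : OG Q ι → G := Sum.elim x (Sum.elim t (Sum.elim s (fun _ => k)))
  let e : OG Q ι → G := fun a => match a with
    | Sum.inl j => x j * t M.q0
    | Sum.inr a => o (Sum.inr a)
  have hw' : ∀ n : ℤ, w ^ n = 1 → n = 0 := hw
  have de : ∀ a, deg (e a) = Multiplicative.ofAdd 1 := by
    rintro (j | q | r | _) 
    · simp [e, x, dX, dt]
    · exact dt q
    · exact ds r
    · exact dk
  have dw : deg w = 1 := by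
    simp only [w, T, map_mul, map_inv, dX, dt, dk]
    rfl
  obtain ⟨P, _, j, z, y, jinj, g1, g2, g3⟩ := gadget w e hw' (by
    intro i n m hnm
    have := congrArg deg hnm
    rw [map_zpow, map_zpow, dw, de, one_zpow] at this
    simpa [← ofAdd_zsmul] using this)
  have Xs : ∀ i (n : ℕ), X (Multiplicative.ofAdd (Pi.single i (n : ℤ))) = x i ^ n := by
    intro i n
    simp only [x]
    rw [← map_pow, ← ofAdd_nsmul]
    congr 2
    funext l
    by_cases hl : l = i
    · subst hl; simp
    · simp [hl]
  let v : Gen Q ι → P := Sum.elim (fun a => j (o a)) (Sum.elim y (Sum.elim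
    (fun _ => j (X (Multiplicative.ofAdd (Pi.single M.main (N : ℤ))))) (fun _ => z)))
  have vw : M.wv v = j w := by
    simp [wv, v, w, T, o, gk, gom, gt]
  have ve : ∀ a, M.ev v a = j (e a) := by
    rintro (i | a)
    · simp [ev, v, e, o, gx, gt]
    · rfl
  refine ⟨P, inferInstance, v, ?_, ?_, ?_⟩
  · intro i
    rcases i with ⟨a, b⟩ | ⟨r, i⟩ | r | r | _ | _ | a | a
    · show j _ * j _ = j _ * j _
      rw [← map_mul, ← map_mul]
      congr 1
      show X (Multiplicative.ofAdd (Pi.single a 1)) * X (Multiplicative.ofAdd (Pi.single b 1)) =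
        X (Multiplicative.ofAdd (Pi.single b 1)) * X (Multiplicative.ofAdd (Pi.single a 1))
      rw [← map_mul X, ← map_mul X, mul_comm]
    · have h := h1 r (Pi.single i 1)
      have e1 : (if i = M.key r.1 then (5 : ℤ) else 1) =
        ((if i = M.key r.1 then 5 else 1 : ℕ) : ℤ) := by split_ifs <;> rfl
      have e2 : (if i = M.key r.1 then (M.p r.1 r.2 : ℤ) else 1) =
        ((if i = M.key r.1 then M.p r.1 r.2 else 1 : ℕ) : ℤ) := by split_ifs <;> rfl
      rw [scale_single, scale_single, e1, e2, Xs, Xs] at h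
      have := congrArg j h
      rw [map_mul, map_mul, map_pow, map_pow] at this
      exact this
    · have h := h2 r
      rw [Xs, Xs] at h
      have := congrArg j h
      simp only [map_mul, map_inv, map_pow] at this
      exact this
    · show j _ * j _ = j _ * j _
      rw [← map_mul, ← map_mul]
      exact congrArg j (h3 r)
    · have h := h4
      rw [Xs] at h
      have := congrArg j h
      simp only [map_mul, map_inv, map_pow] at this
      exact this
    · show (M.wv v)⁻¹ * z * M.wv v = z ^ 2
      rw [vw, g1]
    · exact g2 a
    · show (y a)⁻¹ * M.ev v a * y a = M.ev v a ^ 2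
      rw [ve, g3]
  · show j _ = j _ ^ _
    rw [← map_pow]
    exact congrArg j (Xs _ _)
  · by_contra! hv
    have h1 : M.wv v = 1 := by simp [wv, hv]
    rw [vw, ← map_one j] at h1
    have := hw' 1 (by rw [zpow_one]; exact jinj h1)
    omega

end Mach
namespace Mach

/-- Restriction of a machine to a closed set of states. -/
def restrict {Q ι : Type} (M : Mach Q ι) (S : Set Q) (h0 : M.q0 ∈ S) (hh : M.qh ∈ S)
    (ht : ∀ q ∈ S, ∀ d, M.tgt q d ∈ S) : Mach S ι where
  key q := M.key q
  tgt q d := ⟨M.tgt q d, ht q q.2 d⟩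
  p q d := M.p q d
  c q d := M.c q d
  q0 := ⟨M.q0, h0⟩
  qh := ⟨M.qh, hh⟩
  main := M.main
  hm := M.hm
  p_pos q d := M.p_pos q d
  tgt_qh d := Subtype.ext (M.tgt_qh d)
  p_qh d := M.p_qh d
  c_qh d := M.c_qh d

theorem restrict_reach {Q ι : Type} [DecidableEq ι] (M : Mach Q ι) (S : Set Q) (h0 : M.q0 ∈ S)
    (hh : M.qh ∈ S) (ht : ∀ q ∈ S, ∀ d, M.tgt q d ∈ S) (q : S) (a : ι → ℤ) :
    (M.restrict S h0 hh ht).Reach (q, a) ↔ M.Reach (q.1, a) := by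
  have h : ∀ n C, (fun C : S × (ι → ℤ) => ((C.1 : Q), C.2))
      ((M.restrict S h0 hh ht).step^[n] C) = M.step^[n] (C.1.1, C.2) := by
    intro n
    induction n with
    | zero => intro C; rfl
    | succ n ih => intro C; exact ih _
  refine exists_congr fun n => ?_
  have h1 := h n (q, a)
  simp only at h1
  rw [← h1]
  generalize (M.restrict S h0 hh ht).step^[n] (q, a) = C
  obtain ⟨C1, C2⟩ := C
  simp only [Prod.mk.injEq, restrict]
  rw [Subtype.ext_iff]

end Mach

namespace Sim

open Turing Turing.PartrecToTM2

def dig : Γ' → Fin 5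
  | Γ'.consₗ => 1
  | Γ'.cons => 2
  | Γ'.bit0 => 3
  | Γ'.bit1 => 4

def dec (d : Fin 5) : Option Γ' :=
  if d = 1 then some Γ'.consₗ else if d = 2 then some Γ'.cons else
    if d = 3 then some Γ'.bit0 else if d = 4 then some Γ'.bit1 else none

def digo : Option Γ' → Fin 5
  | none => 0
  | some g => dig g

theorem dec_digo (o : Option Γ') : dec (digo o) = o := by
  rcases o with _ | (_ | _ | _ | _) <;> rfl

def code : List Γ' → ℕ
  | [] => 0
  | g :: L => 5 * code L + dig g

theorem code_split (L : List Γ') : code L = 5 * code L.tail + digo L.head? := by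
  cases L <;> rfl

abbrev St := Option Stmt' × Option Γ'

def skey : St → K'
  | (some (TM2.Stmt.push k _ _), _) => k
  | (some (TM2.Stmt.peek k _ _), _) => k
  | (some (TM2.Stmt.pop k _ _), _) => k
  | _ => K'.main

def stgt : St → Fin 5 → St
  | (none, v), _ => (none, v)
  | (some (TM2.Stmt.push _ _ q), v), _ => (some q, v)
  | (some (TM2.Stmt.peek _ f q), v), d => (some q, f v (dec d))
  | (some (TM2.Stmt.pop _ f q), v), d => (some q, f v (dec d))
  | (some (TM2.Stmt.load a q), v), _ => (some q, a v)
  | (some (TM2.Stmt.branch f q₁ q₂), v), _ => (some (cond (f v) q₁ q₂), v)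
  | (some (TM2.Stmt.goto f), v), _ => (some (tr (f v)), v)
  | (some TM2.Stmt.halt, v), _ => (none, v)

def sp : St → ℕ
  | (some (TM2.Stmt.push _ _ _), _) => 25
  | (some (TM2.Stmt.pop _ _ _), _) => 1
  | _ => 5

def sc : St → Fin 5 → ℕ
  | (some (TM2.Stmt.push _ f _), v), d => 5 * d + dig (f v)
  | (some (TM2.Stmt.pop _ _ _), _), _ => 0
  | _, d => d

def mach (c : ToPartrec.Code) : Mach St K' where
  key := skey
  tgt := stgt
  p q _ := sp q
  c := sc
  q0 := (some (tr (trNormal c Cont'.halt)), none)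
  qh := (none, none)
  main := K'.main
  hm := 2
  p_pos q d := by unfold sp; split <;> norm_num
  tgt_qh d := rfl
  p_qh d := rfl
  c_qh d := rfl

def cds (S : K' → List Γ') : K' → ℤ := fun k => (code (S k) : ℤ)

def enc (C : Cfg') : St × (K' → ℤ) := ((C.l.map tr, C.var), cds C.stk)

variable (c : ToPartrec.Code)

theorem mstep (q : St) (S : K' → List Γ') :
    (mach c).step (q, cds S) = (stgt q (digo (S (skey q)).head?),
      Function.update (cds S) (skey q)
        ((sp q : ℤ) * (code (S (skey q)).tail : ℤ) + (sc q (digo (S (skey q)).head?) : ℤ))) := by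
  apply (mach c).step_eq
  show ((code _ : ℕ) : ℤ) = _
  rw [code_split]
  push_cast
  rfl

theorem upd_same (S : K' → List Γ') (k : K') :
    Function.update (cds S) k (((5 : ℕ) : ℤ) * (code (S k).tail : ℤ) +
      (((digo (S k).head? : Fin 5) : ℕ) : ℤ)) = cds S := by
  have : (((5 : ℕ) : ℤ) * (code (S k).tail : ℤ) +
      (((digo (S k).head? : Fin 5) : ℕ) : ℤ)) = cds S k := by
    show _ = ((code _ : ℕ) : ℤ)
    rw [code_split (S k)]
    push_cast
    rfl
  rw [this, Function.update_eq_self]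

theorem cds_update (S : K' → List Γ') (k : K') (L : List Γ') :
    cds (Function.update S k L) = Function.update (cds S) k (code L : ℤ) := by
  funext j
  by_cases h : j = k
  · subst h; simp [cds]
  · simp [cds, h]

theorem sim (q : Stmt') : ∀ v S, ∃ n, 0 < n ∧
    (mach c).step^[n] ((some q, v), cds S) = enc (TM2.stepAux q v S) := by
  have key : ∀ C C' D, (mach c).step C = C' → (∃ n, 0 < n ∧ (mach c).step^[n] C' = D) →
      ∃ n, 0 < n ∧ (mach c).step^[n] C = D := by
    rintro C C' D rfl ⟨n, hn, h⟩
    exact ⟨n + 1, by omega, h⟩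
  induction q with
  | push k f q ih =>
    intro v S
    refine key _ _ _ ?_ (ih v (Function.update S k (f v :: S k)))
    rw [mstep, cds_update]
    congr 2
    simp only [skey, sp, sc, code]
    rw [code_split (S k)]
    push_cast
    ring
  | peek k f q ih =>
    intro v S
    refine key _ _ _ ?_ (ih (f v (S k).head?) S)
    rw [mstep]
    refine Prod.ext ?_ (upd_same S _)
    simp only [stgt, skey, dec_digo]
  | pop k f q ih =>
    intro v S
    refine key _ _ _ ?_ (ih (f v (S k).head?) (Function.update S k (S k).tail))
    rw [mstep, cds_update]
    refine Prod.ext ?_ ?_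
    · simp only [stgt, skey, dec_digo]
    · simp [skey, sp, sc]
  | load a q ih =>
    intro v S
    refine key _ _ _ ?_ (ih (a v) S)
    rw [mstep]
    exact Prod.ext rfl (upd_same S _)
  | branch f q₁ q₂ ih1 ih2 =>
    intro v S
    have : ∃ n, 0 < n ∧ (mach c).step^[n] ((some (cond (f v) q₁ q₂), v), cds S) =
        enc (TM2.stepAux (TM2.Stmt.branch f q₁ q₂) v S) := by
      rw [TM2.stepAux]
      cases f v
      · exact ih2 v S
      · exact ih1 v S
    refine key _ _ _ ?_ this
    rw [mstep]
    exact Prod.ext rfl (upd_same S _)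
  | goto f =>
    intro v S
    refine ⟨1, one_pos, ?_⟩
    rw [Function.iterate_one, mstep]
    exact Prod.ext rfl (upd_same S _)
  | halt =>
    intro v S
    refine ⟨1, one_pos, ?_⟩
    rw [Function.iterate_one, mstep]
    exact Prod.ext rfl (upd_same S _)

theorem iter_fix (n : ℕ) (a : K' → ℤ) :
    (mach c).step^[n] ((mach c).qh, a) = ((mach c).qh, a) :=
  Function.iterate_fixed ((mach c).step_qh a) n

theorem fwd {C C' : Cfg'} (h : StateTransition.Reaches (TM2.step tr) C C') :
    ∃ n, (mach c).step^[n] (enc C) = enc C' := by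
  induction h with
  | refl => exact ⟨0, rfl⟩
  | @tail C1 C2 _ h ih =>
    obtain ⟨n, hn⟩ := ih
    obtain ⟨l, v, S⟩ := C1
    cases l with
    | none => exact absurd h (by rintro ⟨⟩)
    | some l =>
      have h : TM2.stepAux (tr l) v S = C2 := Option.some.inj h
      obtain ⟨m, _, hm⟩ := sim c (tr l) v S
      refine ⟨m + n, ?_⟩
      rw [Function.iterate_add_apply, hn, ← h]
      exact hm

theorem bwd (N : ℕ) : ∀ (C : Cfg') (a : K' → ℤ), (mach c).step^[N] (enc C) = ((mach c).qh, a) →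
    ∃ C', StateTransition.Reaches (TM2.step tr) C C' ∧ TM2.step tr C' = none := by
  induction N using Nat.strong_induction_on with
  | _ N ih =>
    intro C a hC
    obtain ⟨l, v, S⟩ := C
    cases l with
    | none => exact ⟨_, Relation.ReflTransGen.refl, rfl⟩
    | some l =>
      obtain ⟨m, hm0, hm⟩ := sim c (tr l) v S
      have hN : N ≠ 0 := by
        rintro rfl
        have := congrArg (fun x => x.1.1) hC
        simp [enc, mach] at this
      have h2 : (mach c).step^[N - m] (enc (TM2.stepAux (tr l) v S)) = ((mach c).qh, a) := by
        rw [← hm, ← Function.iterate_add_apply]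
        rcases le_total m N with h | h
        · rw [Nat.sub_add_cancel h]; exact hC
        · have e : N - m + m = (m - N) + N := by omega
          rw [e, Function.iterate_add_apply]
          have hC' : (mach c).step^[N] ((some (tr l), v), cds S) = ((mach c).qh, a) := hC
          rw [hC', iter_fix]
      obtain ⟨C', h3, h4⟩ := ih (N - m) (by omega) _ _ h2
      exact ⟨C', Relation.ReflTransGen.head rfl h3, h4⟩

theorem cds_elim (L : List Γ') : cds (K'.elim L [] [] []) = Pi.single K'.main (code L : ℤ) := by
  funext k
  cases k <;> simp [cds, code]

theorem reach_iff (n : ℕ) (h0 : ∀ v ∈ c.eval [n], v = [0]) :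
    (mach c).Reach ((mach c).q0, Pi.single K'.main (code (trList [n]) : ℤ)) ↔ (c.eval [n]).Dom := by
  have hi : ((mach c).q0, Pi.single K'.main (code (trList [n]) : ℤ)) = enc (init c [n]) := by
    rw [← cds_elim]; rfl
  rw [hi]
  have ev := tr_eval c [n]
  constructor
  · rintro ⟨N, h⟩
    obtain ⟨C', h1, h2⟩ := bwd c N _ _ h
    have h3 : C' ∈ StateTransition.eval (TM2.step tr) (init c [n]) :=
      StateTransition.mem_eval.2 ⟨h1, h2⟩
    rw [ev] at h3
    obtain ⟨v, hv, _⟩ := (Part.mem_map_iff _).1 h3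
    exact Part.dom_iff_mem.2 ⟨v, hv⟩
  · intro h
    obtain ⟨v, hv⟩ := Part.dom_iff_mem.1 h
    have h3 : halt v ∈ StateTransition.eval (TM2.step tr) (init c [n]) := by
      rw [ev]; exact Part.mem_map _ hv
    obtain ⟨N, hN⟩ := fwd c (StateTransition.mem_eval.1 h3).1
    refine ⟨N, hN.trans ?_⟩
    rw [h0 v hv]
    refine Prod.ext rfl ?_
    show cds (K'.elim (trList [0]) [] [] []) = _
    rw [cds_elim]
    simp [trList, code, mach, dig]

theorem some_mem_stmts {K Λ σ : Type} {Γ : K → Type} (M : Λ → TM2.Stmt Γ Λ σ) (S : Finset Λ)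
    {l : Λ} (h : l ∈ S) : some (M l) ∈ TM2.stmts M S := by
  classical
  simp only [TM2.stmts, Finset.some_mem_insertNone, Finset.mem_biUnion]
  exact ⟨_, h, TM2.stmts₁_self⟩

theorem none_mem_stmts {K Λ σ : Type} {Γ : K → Type} (M : Λ → TM2.Stmt Γ Λ σ) (S : Finset Λ) :
    none ∈ TM2.stmts M S := by
  classical
  simp [TM2.stmts]

theorem branch_mem {K Λ σ : Type} {Γ : K → Type} (f : σ → Bool) (q₁ q₂ : TM2.Stmt Γ Λ σ)
    (b : Bool) : cond b q₁ q₂ ∈ TM2.stmts₁ (TM2.Stmt.branch f q₁ q₂) := by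
  classical
  cases b <;> simp [TM2.stmts₁, TM2.stmts₁_self]

theorem closed (q : St) (hq : q.1 ∈ TM2.stmts tr (codeSupp c Cont'.halt)) (d : Fin 5) :
    (stgt q d).1 ∈ TM2.stmts tr (codeSupp c Cont'.halt) := by
  have sup := tr_supports c Cont'.halt
  obtain ⟨q, v⟩ := q
  rcases q with _ | (⟨k, f, q⟩ | ⟨k, f, q⟩ | ⟨k, f, q⟩ | ⟨a, q⟩ | ⟨f, q₁, q₂⟩ | f | _)
  · exact hq
  all_goals simp only [stgt] at hq ⊢
  · exact TM2.stmts_trans (by simp [TM2.stmts₁, TM2.stmts₁_self]) hq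
  · exact TM2.stmts_trans (by simp [TM2.stmts₁, TM2.stmts₁_self]) hq
  · exact TM2.stmts_trans (by simp [TM2.stmts₁, TM2.stmts₁_self]) hq
  · exact TM2.stmts_trans (by simp [TM2.stmts₁, TM2.stmts₁_self]) hq
  · exact TM2.stmts_trans (branch_mem _ _ _ _) hq
  · have h := @TM2.stmts_supportsStmt _ _ _ _ ⟨trNormal c Cont'.halt⟩ _ _ _ sup hq
    have h2 : f v ∈ codeSupp c Cont'.halt := h v
    exact some_mem_stmts _ _ h2
  · exact none_mem_stmts _ _

theorem exists_mach (f : ℕ →. ℕ) (hf : Partrec f) (h0 : ∀ n, ∀ y ∈ f n, y = 0) :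
    ∃ (Q : Type) (_ : Fintype Q) (M : Mach Q K'), ∀ n,
      M.Reach (M.q0, Pi.single M.main (code (trList [n]) : ℤ)) ↔ (f n).Dom := by
  classical
  obtain ⟨c, hc⟩ := ToPartrec.Code.exists_code (Nat.Partrec'.part_iff₁.2 hf)
  have hc' : ∀ n, c.eval [n] = pure <$> f n := fun n => hc ⟨[n], rfl⟩
  let S : Set St := {q | q.1 ∈ TM2.stmts tr (codeSupp c Cont'.halt)}
  have hfin : Finite S := by
    have : Finite (TM2.stmts tr (codeSupp c Cont'.halt)) := inferInstance
    refine Finite.of_injective (fun q : S => ((⟨q.1.1, q.2⟩ :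
      {x // x ∈ TM2.stmts tr (codeSupp c Cont'.halt)}), q.1.2)) ?_
    rintro ⟨⟨a, b⟩, h⟩ ⟨⟨a', b'⟩, h'⟩ e
    have e1 := congrArg (fun x => x.1.1) e
    have e2 := congrArg (fun x => x.2) e
    exact Subtype.ext (Prod.ext e1 e2)
  have h1 : (mach c).q0 ∈ S := some_mem_stmts _ _ (tr_supports c Cont'.halt).1
  have h2 : (mach c).qh ∈ S := none_mem_stmts _ _
  refine ⟨S, Fintype.ofFinite S, (mach c).restrict S h1 h2 (fun q hq d => closed c q hq d), ?_⟩
  intro n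
  refine (Mach.restrict_reach _ _ _ _ _ _ _).trans ?_
  refine (reach_iff c n ?_).trans ?_
  · intro v hv
    rw [hc'] at hv
    obtain ⟨y, hy, rfl⟩ := (Part.mem_map_iff _).1 hv
    rw [h0 n y hy]
    rfl
  · rw [hc']; rfl

/-- The encoding of inputs. -/
def inp (n : ℕ) : ℕ := code (trList [n])


theorem inp_eq (n : ℕ) : inp n = code (trNum (n : Num) ++ [Γ'.cons]) := by
  simp [inp, trList, trNat]

theorem inp_zero : inp 0 = 2 := by
  simp [inp, trList, code, dig]

theorem inp_pos (p : PosNum) : inp (p : ℕ) = code (trPosNum p ++ [Γ'.cons]) := by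
  rw [inp_eq]
  have : (((p : ℕ)) : Num) = Num.pos p := by
    simp
  rw [this]
  rfl

theorem inp_rec (n : ℕ) (hn : n ≠ 0) : inp n = 5 * inp (n / 2) + (3 + n % 2) := by
  obtain ⟨p, rfl⟩ : ∃ p : PosNum, (p : ℕ) = n := by
    have h := Num.to_of_nat n
    rcases hN : (n : Num) with _ | p
    · rw [hN] at h
      exact absurd h.symm hn
    · rw [hN] at h
      exact ⟨p, h⟩
  rw [inp_pos]
  cases p with
  | one =>
    have : ((PosNum.one : PosNum) : ℕ) = 1 := rfl
    rw [this]
    norm_num [inp_zero, trPosNum, code, dig]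
  | bit0 p =>
    have h : ((PosNum.bit0 p : PosNum) : ℕ) = 2 * (p : ℕ) := by
      rw [PosNum.cast_bit0]; ring
    rw [h]
    have h1 : 2 * (p : ℕ) / 2 = p := by omega
    have h2 : 2 * (p : ℕ) % 2 = 0 := by omega
    rw [h1, h2, inp_pos]
    rfl
  | bit1 p =>
    have h : ((PosNum.bit1 p : PosNum) : ℕ) = 2 * (p : ℕ) + 1 := by
      rw [PosNum.cast_bit1]; ring
    rw [h]
    have h1 : (2 * (p : ℕ) + 1) / 2 = p := by omega
    have h2 : (2 * (p : ℕ) + 1) % 2 = 1 := by omega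
    rw [h1, h2, inp_pos]
    rfl

theorem inp_primrec : Primrec inp := by
  have hg : Primrec₂ (fun (_ : Unit) (L : List ℕ) => if L.length = 0 then some 2 else
      (L[L.length / 2]?).map (fun x => 5 * x + (3 + L.length % 2))) := by
    have hl : Primrec (fun a : Unit × List ℕ => a.2.length) := Primrec.list_length.comp Primrec.snd
    refine Primrec.ite (PrimrecRel.comp Primrec.eq hl (Primrec.const 0)) (Primrec.const _) ?_
    refine Primrec.option_map (Primrec.list_getElem?.comp Primrec.snd
      (Primrec.nat_div.comp hl (Primrec.const 2))) ?_
    refine Primrec.nat_add.comp (Primrec.nat_mul.comp (Primrec.const 5) Primrec.snd)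
      (Primrec.nat_add.comp (Primrec.const 3) (Primrec.nat_mod.comp (hl.comp Primrec.fst)
        (Primrec.const 2)))
  have := Primrec.nat_strong_rec (fun (_ : Unit) n => inp n) hg (by
    intro _ n
    by_cases hn : n = 0
    · subst hn; simp [inp_zero]
    · have : n / 2 < n := by omega
      simp [hn, this, inp_rec n hn])
  exact this.comp (Primrec.const ()) Primrec.id

end Sim
/-! ### Assembling the presentation -/

section Assembly

open Mach Turing.PartrecToTM2

instance fintypeK : Fintype K' :=
  ⟨{K'.main, K'.rev, K'.aux, K'.stack}, fun x => by cases x <;> simp⟩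

/-- The word `x ^ N * ω⁻¹`. -/
def powWord (x om : ℕ) (N : ℕ) : List (ℕ × Bool) :=
  (List.cons (x, true))^[N] [(om, false)]

theorem mk_powWord (x om N : ℕ) :
    FreeGroup.mk (powWord x om N) = FreeGroup.of x ^ N * (FreeGroup.of om)⁻¹ := by
  induction N with
  | zero => simp [powWord, FreeGroup.of, FreeGroup.invRev]
  | succ N ih =>
    rw [powWord, Function.iterate_succ_apply', ← powWord, pow_succ', mul_assoc, ← ih, FreeGroup.of,
      FreeGroup.mul_mk]
    rfl

theorem powWord_primrec (x om : ℕ) : Primrec (powWord x om) :=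
  Primrec.nat_iterate Primrec.id (Primrec.const _)
    ((Primrec.list_cons.comp (Primrec.const _) Primrec.snd).to₂)

theorem presProj_word (P : ℕ × List (List (ℕ × Bool))) (w : List (ℕ × Bool)) (hw : w ∈ P.2) :
    presProj P (FreeGroup.mk w) = 1 :=
  PresentedGroup.one_of_mem (Or.inl ⟨w, hw, rfl⟩)

theorem presGroup_nontrivial (P : ℕ × List (List (ℕ × Bool))) {G : Type} [Group G] (v : ℕ → G)
    (h1 : ∀ w ∈ P.2, FreeGroup.lift v (FreeGroup.mk w) = 1) (h2 : ∀ i, P.1 ≤ i → v i = 1)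
    (h3 : ∃ i, v i ≠ 1) : Nontrivial (presGroup P) := by
  obtain ⟨i, hi⟩ := h3
  have h : ∀ r ∈ presRels P, FreeGroup.lift v r = 1 := by
    rintro r (⟨w, hw, rfl⟩ | ⟨i, hi, rfl⟩)
    · exact h1 w hw
    · rw [FreeGroup.lift_apply_of]; exact h2 i hi
  refine ⟨⟨presProj P (FreeGroup.of i), 1, fun he => hi ?_⟩⟩
  have h4 : PresentedGroup.toGroup h (PresentedGroup.of i) = PresentedGroup.toGroup h 1 :=
    congrArg (PresentedGroup.toGroup h) he
  rwa [map_one, PresentedGroup.toGroup.of] at h4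

/-- One machine together with an embedding of its generators into `ℕ`. -/
theorem words_iff {Q : Type} [Fintype Q] (M : Mach Q K') (idx : Gen Q K' → ℕ) {G : Type} [Group G]
    (f : FreeGroup ℕ →* G) :
    (∀ w ∈ (Finset.univ.toList.map fun i => (FreeGroup.map idx (M.relator i)).toWord),
      f (FreeGroup.mk w) = 1) ↔ M.Sat (fun g => f (FreeGroup.of (idx g))) := by
  rw [M.sat_iff]
  have : ∀ r, FreeGroup.lift (fun g => f (FreeGroup.of (idx g))) r = f (FreeGroup.map idx r) := by
    intro r
    have h : FreeGroup.lift (fun g => f (FreeGroup.of (idx g))) = f.comp (FreeGroup.map idx) := by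
      ext g
      simp
    rw [h]; rfl
  simp only [this]
  constructor
  · intro h i
    have := h _ (List.mem_map.2 ⟨i, Finset.mem_toList.2 (Finset.mem_univ i), rfl⟩)
    rwa [FreeGroup.mk_toWord] at this
  · intro h w hw
    obtain ⟨i, -, rfl⟩ := List.mem_map.1 hw
    rw [FreeGroup.mk_toWord]
    exact h i

theorem pow_iff (x om N : ℕ) {G : Type} [Group G] (f : FreeGroup ℕ →* G) :
    f (FreeGroup.mk (powWord x om N)) = 1 ↔ f (FreeGroup.of om) = f (FreeGroup.of x) ^ N := by
  rw [mk_powWord, map_mul, map_pow, map_inv, mul_inv_eq_one, eq_comm]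

theorem diag_partrec (b : ℕ) : Partrec (fun n : ℕ =>
    ((Denumerable.ofNat Nat.Partrec.Code n).eval n).bind
      (fun y => ((if y = b then some 0 else none : Option ℕ) : Part ℕ))) := by
  refine Partrec.bind (Nat.Partrec.Code.eval_part.comp (Computable.ofNat _) Computable.id) ?_
  refine Computable.ofOption ?_
  exact (Primrec.ite (PrimrecRel.comp Primrec.eq Primrec.snd (Primrec.const b))
    (Primrec.const _) (Primrec.const _)).to_comp

theorem diag_dom (b n : ℕ) : (((Denumerable.ofNat Nat.Partrec.Code n).eval n).bind
      (fun y => ((if y = b then some 0 else none : Option ℕ) : Part ℕ))).Dom ↔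
      b ∈ (Denumerable.ofNat Nat.Partrec.Code n).eval n := by
  rw [Part.dom_iff_mem]
  constructor
  · rintro ⟨y, hy⟩
    obtain ⟨a, ha, hb⟩ := Part.mem_bind_iff.1 hy
    by_cases h : a = b
    · rwa [h] at ha
    · simp [h] at hb
  · intro h
    exact ⟨0, Part.mem_bind_iff.2 ⟨b, h, by simp⟩⟩

theorem exists_family : ∃ (nA nB : ℕ) (L : ℕ → List (List (ℕ × Bool))), Computable L ∧ ∀ n,
    let P : ℕ × List (List (ℕ × Bool)) := (nA + nB, L n)
    let E := (Denumerable.ofNat Nat.Partrec.Code n).eval n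
    (0 ∈ E → ∀ i < nA, presProj P (FreeGroup.of i) = 1) ∧
    (1 ∈ E → ∀ i < nA + nB, nA ≤ i → presProj P (FreeGroup.of i) = 1) ∧
    Nontrivial (presGroup P) := by
  classical
  obtain ⟨QA, _, A, hA⟩ := Sim.exists_mach _ (diag_partrec 0) (by
    intro n y hy
    obtain ⟨a, ha, hb⟩ := Part.mem_bind_iff.1 hy
    by_cases h : a = 0
    · simpa [h] using hb
    · simp [h] at hb)
  obtain ⟨QB, _, B, hB⟩ := Sim.exists_mach _ (diag_partrec 1) (by
    intro n y hy
    obtain ⟨a, ha, hb⟩ := Part.mem_bind_iff.1 hy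
    by_cases h : a = 1
    · simpa [h] using hb
    · simp [h] at hb)
  simp only [diag_dom] at hA hB
  let eA := Fintype.equivFin (Gen QA K')
  let eB := Fintype.equivFin (Gen QB K')
  let nA := Fintype.card (Gen QA K')
  let nB := Fintype.card (Gen QB K')
  let iA : Gen QA K' → ℕ := fun g => eA g
  let iB : Gen QB K' → ℕ := fun g => nA + eB g
  let LA := Finset.univ.toList.map fun i => (FreeGroup.map iA (A.relator i)).toWord
  let LB := Finset.univ.toList.map fun i => (FreeGroup.map iB (B.relator i)).toWord
  let wA : ℕ → List (ℕ × Bool) := fun n => powWord (iA (gx A.main)) (iA gom) (Sim.inp n)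
  let wB : ℕ → List (ℕ × Bool) := fun n => powWord (iB (gx B.main)) (iB gom) (Sim.inp n)
  let L : ℕ → List (List (ℕ × Bool)) := fun n => wA n :: wB n :: (LA ++ LB)
  have hL : Computable L := by
    refine Primrec.to_comp ?_
    exact Primrec.list_cons.comp ((powWord_primrec _ _).comp Sim.inp_primrec)
      (Primrec.list_cons.comp ((powWord_primrec _ _).comp Sim.inp_primrec) (Primrec.const _))
  have build : ∀ n {G : Type} [Group G] (u : Gen QA K' → G) (u' : Gen QB K' → G),
      A.Sat u → u gom = u (gx A.main) ^ Sim.inp n → B.Sat u' → u' gom = u' (gx B.main) ^ Sim.inp n →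
      ((∃ g, u g ≠ 1) ∨ (∃ g, u' g ≠ 1)) → Nontrivial (presGroup (nA + nB, L n)) := by
    intro n G _ u u' h1 h2 h3 h4 h5
    let v : ℕ → G := fun i => if h : i < nA then u (eA.symm ⟨i, h⟩) else
      if h : i - nA < nB then u' (eB.symm ⟨i - nA, h⟩) else 1
    have vA : ∀ g, v (iA g) = u g := by
      intro g
      have : iA g < nA := (eA g).2
      simp [v, this, iA]
    have vB : ∀ g, v (iB g) = u' g := by
      intro g
      have h1 : ¬ iB g < nA := by simp [iB]
      have h2 : iB g - nA < nB := by simp only [iB, Nat.add_sub_cancel_left]; exact (eB g).2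
      have h3 : (eB g : ℕ) < nB := (eB g).2
      simp [v, iB, h3]
    have vA' : (fun g => FreeGroup.lift v (FreeGroup.of (iA g))) = u := by
      funext g; rw [FreeGroup.lift_apply_of, vA]
    have vB' : (fun g => FreeGroup.lift v (FreeGroup.of (iB g))) = u' := by
      funext g; rw [FreeGroup.lift_apply_of, vB]
    have sA := (words_iff A iA (FreeGroup.lift v)).2 (by rw [vA']; exact h1)
    have sB := (words_iff B iB (FreeGroup.lift v)).2 (by rw [vB']; exact h3)
    refine presGroup_nontrivial _ v ?_ ?_ ?_
    · intro w hw
      rcases List.mem_cons.1 hw with rfl | hw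
      · rw [pow_iff, FreeGroup.lift_apply_of, FreeGroup.lift_apply_of, vA, vA, h2]
      rcases List.mem_cons.1 hw with rfl | hw
      · rw [pow_iff, FreeGroup.lift_apply_of, FreeGroup.lift_apply_of, vB, vB, h4]
      rcases List.mem_append.1 hw with hw | hw
      · exact sA w hw
      · exact sB w hw
    · intro i hi
      have hi : nA + nB ≤ i := hi
      have h1 : ¬ i < nA := by omega
      have h2 : ¬ i - nA < nB := by omega
      simp [v, h1, h2]
    · rcases h5 with ⟨g, hg⟩ | ⟨g, hg⟩
      · exact ⟨iA g, by rwa [vA]⟩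
      · exact ⟨iB g, by rwa [vB]⟩
  refine ⟨nA, nB, L, hL, fun n => ⟨?_, ?_, ?_⟩⟩
  · intro h0 i hi
    have hs := (words_iff A iA (presProj (nA + nB, L n))).1 (fun w hw => presProj_word _ w (by
      exact List.mem_cons_of_mem _ (List.mem_cons_of_mem _ (List.mem_append_left _ hw))))
    have hp := (pow_iff (iA (gx A.main)) (iA gom) (Sim.inp n) (presProj (nA + nB, L n))).1
      (presProj_word _ _ (List.mem_cons_self))
    have := A.collapse _ hs (Sim.inp n) hp ((hA n).2 h0) (eA.symm ⟨i, hi⟩)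
    simpa [iA] using this
  · intro h0 i hi hi'
    have hs := (words_iff B iB (presProj (nA + nB, L n))).1 (fun w hw => presProj_word _ w (by
      exact List.mem_cons_of_mem _ (List.mem_cons_of_mem _ (List.mem_append_right _ hw))))
    have hp := (pow_iff (iB (gx B.main)) (iB gom) (Sim.inp n) (presProj (nA + nB, L n))).1
      (presProj_word _ _ (List.mem_cons_of_mem _ (List.mem_cons_self)))
    have := B.collapse _ hs (Sim.inp n) hp ((hB n).2 h0) (eB.symm ⟨i - nA, by omega⟩)
    simp only [iB, Equiv.apply_symm_apply] at this
    rwa [Nat.add_sub_cancel' hi'] at this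
  · by_cases h0 : 0 ∈ (Denumerable.ofNat Nat.Partrec.Code n).eval n
    · have h1 : 1 ∉ (Denumerable.ofNat Nat.Partrec.Code n).eval n := fun h1 =>
        absurd (Part.mem_unique h0 h1) (by norm_num)
      obtain ⟨G, _, u, h2, h3, h4⟩ := B.model (Sim.inp n) (fun h => h1 ((hB n).1 h))
      exact build n (fun _ => 1) u A.sat_one (by simp) h2 h3 (Or.inr h4)
    · obtain ⟨G, _, u, h2, h3, h4⟩ := A.model (Sim.inp n) (fun h => h0 ((hA n).1 h))
      exact build n u (fun _ => 1) h2 h3 B.sat_one (by simp) (Or.inl h4)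

end Assembly

/-- (Chiodo) There is no general procedure to pick a non-trivial generator from a
finite presentation of a non-trivial group. -/
theorem no_algorithm_picking_nontrivial_generator :
    ¬ ∃ g : ℕ × List (List (ℕ × Bool)) → ℕ, Computable g ∧
      ∀ P : ℕ × List (List (ℕ × Bool)), Nontrivial (presGroup P) →
        g P < P.1 ∧ presProj P (FreeGroup.of (g P)) ≠ 1 := by
  rintro ⟨g, hg, hgP⟩
  obtain ⟨nA, nB, L, hL, H⟩ := exists_family
  have hgc : Computable (fun n => g (nA + nB, L n)) :=
    hg.comp ((Computable.const _).pair hL)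
  have hd : Computable (fun n => if g (nA + nB, L n) < nA then 0 else 1) := by
    have h1 : Primrec (fun i : ℕ => if i < nA then 0 else 1) :=
      Primrec.ite (PrimrecRel.comp Primrec.nat_lt Primrec.id (Primrec.const nA))
        (Primrec.const 0) (Primrec.const 1)
    exact h1.to_comp.comp hgc
  obtain ⟨c, hc⟩ := Nat.Partrec.Code.exists_code.1 (Partrec.nat_iff.1 hd.partrec)
  let e := Encodable.encode c
  have he : (Denumerable.ofNat Nat.Partrec.Code e).eval e =
      Part.some (if g (nA + nB, L e) < nA then 0 else 1) := by
    rw [Denumerable.ofNat_encode, hc]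
    rfl
  obtain ⟨h0, h1, hn⟩ := H e
  obtain ⟨hlt, hne⟩ := hgP _ hn
  rw [he] at h0 h1
  by_cases hi : g (nA + nB, L e) < nA
  · exact hne (h0 (by simp [hi]) _ hi)
  · exact hne (h1 (by simp [hi]) _ hlt (not_lt.1 hi))
end
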